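/- arXiv:2503.09384 — 2 statements merged into one kernel-verified Lean document; each statement's English description precedes it below -/
import Mathlib

section
/- There exist universal constants C ≥ 1, Ĉ ≥ 1 and ĉ > 0 such that: for all margin levels 0 ≤ γ < γ' ≤ 1, every hypothesis class H ⊆ [−1,1]^X, and every tuple X' ∈ X^m with m ≥ Ĉ·fat_{ĉ(γ'−γ)}(H)/(γ'−γ)², one has ln |N_∞(X', Conv(H)_{⌈2γ'⌉}, (γ'−γ)/2)| ≤ (C·Ĉ·fat_{ĉ(γ'−γ)}(H)/(γ'−γ)²)·ln^{3/2}( ((γ'−γ)²·m/(Ĉ·fat_{ĉ(γ'−γ)}(H)))·(8γ'/(γ'−γ)) ). -/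
open MeasureTheory Real
open scoped ENNReal NNReal

noncomputable section

namespace Agb

/-- signed value of a boolean label: `true ↦ 1`, `false ↦ -1`. -/
def bval (b : Bool) : ℝ := if b then 1 else -1

variable {X : Type*}

/-- a hypothesis is binary (±1-valued) -/
def IsBinary (h : X → ℝ) : Prop := ∀ x, h x = 1 ∨ h x = -1

/-- correlation of a hypothesis under a distribution on `X × Bool` -/
def corr [MeasurableSpace X] (D : Measure (X × Bool)) (h : X → ℝ) : ℝ :=
  ∫ p, bval p.2 * h p.1 ∂D

/-- error of a classifier under a distribution on `X × Bool` -/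
def err [MeasurableSpace X] (D : Measure (X × Bool)) (h : X → ℝ) : ℝ :=
  (D {p | h p.1 ≠ bval p.2}).toReal

/-- `lam`-margin loss of `g` under a distribution on `X × Bool` -/
def mloss [MeasurableSpace X] (D : Measure (X × Bool)) (lam : ℝ) (g : X → ℝ) : ℝ :=
  (D {p | bval p.2 * g p.1 ≤ lam}).toReal

/-- the `m`-fold product (i.i.d. sample) measure -/
def iid {α : Type*} [MeasurableSpace α] (D : Measure α) (m : ℕ) :
    Measure (Fin m → α) :=
  Measure.pi fun _ => D

/-- truncated logarithm -/
def Ln (x : ℝ) : ℝ := Real.log (max x (Real.exp 1))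

/-- `H` shatters the points `x` -/
def Shatters (H : Set (X → ℝ)) {d : ℕ} (x : Fin d → X) : Prop :=
  ∀ b : Fin d → Bool, ∃ h ∈ H, ∀ i, h (x i) = bval (b i)

/-- the VC dimension of `H` is at most `d` -/
def VCLe (H : Set (X → ℝ)) (d : ℕ) : Prop :=
  ∀ x : Fin (d + 1) → X, Function.Injective x → ¬ Shatters H x

/-- `H` α-fat-shatters the points `x` with levels `r` -/
def FatShatters (H : Set (X → ℝ)) (α : ℝ) {d : ℕ} (x : Fin d → X) (r : Fin d → ℝ) : Prop :=
  ∀ b : Fin d → Bool, ∃ h ∈ H, ∀ i,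
    (b i = true → r i + α ≤ h (x i)) ∧ (b i = false → h (x i) ≤ r i - α)

/-- `d` is the fat-shattering dimension of `H` at level `α` -/
def IsFatDim (H : Set (X → ℝ)) (α : ℝ) (d : ℕ) : Prop :=
  IsGreatest {k : ℕ | ∃ (x : Fin k → X) (r : Fin k → ℝ), FatShatters H α x r} d

/-- `(γ, ε₀, δ₀, m₀, F, H)` agnostic weak learner -/
def IsAWL [MeasurableSpace X] (γ ε₀ δ₀ : ℝ) (m₀ : ℕ) (F H : Set (X → ℝ))
    (W : List (X × Bool) → X → ℝ) : Prop :=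
  (∀ S, W S ∈ H) ∧
  ∀ D : Measure (X × Bool), IsProbabilityMeasure D →
    ENNReal.ofReal (1 - δ₀) ≤
      iid D m₀ {S | γ * (⨆ f ∈ F, corr D f) - ε₀ ≤ corr D (W (List.ofFn S))}

/-- sign function, with `sign 0 = 1` -/
def rsign (x : ℝ) : ℝ := if 0 ≤ x then 1 else -1

/-- empirical `lam`-margin loss on a finite sample -/
def empLoss {m : ℕ} (S : Fin m → X × Bool) (lam : ℝ) (g : X → ℝ) : ℝ :=
  (∑ i, if bval (S i).2 * g (S i).1 ≤ lam then (1 : ℝ) else 0) / m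

/-- truncation of `v` at level `γ` -/
def truncAt (γ : ℝ) (v : X → ℝ) : X → ℝ := fun x => max (-γ) (min γ (v x))

/-- `N` is an `ε`-cover of `G` in sup norm over the points `x` -/
def IsCover {k : ℕ} (x : Fin k → X) (G : Set (X → ℝ)) (ε : ℝ) (N : Set (X → ℝ)) : Prop :=
  ∀ g ∈ G, ∃ g' ∈ N, ∀ i, |g (x i) - g' (x i)| ≤ ε

/-- minimal size of a finite `ε`-cover of `G` over the points `x` (∞ if none exists) -/
def covNum {k : ℕ} (x : Fin k → X) (G : Set (X → ℝ)) (ε : ℝ) : ℝ≥0∞ :=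
  ⨅ (N : Finset (X → ℝ)) (_ : IsCover x G ε ↑N), (N.card : ℝ≥0∞)

end Agb

open Agb

namespace FatCover

open Finset

variable {ι : Type*}

/-- The integer-valued class `F` shatters the pattern `s`: on the coordinates where `s` prescribes a
level `ℓ`, all combinations of values `≤ ℓ` and `≥ ℓ + 2` occur. -/
def PatShatters {b : ℕ} (F : Finset (ι → ℤ)) (s : ι → Option (Fin b)) : Prop :=
  ∀ β : ι → Bool, ∃ f ∈ F, ∀ i ℓ, s i = some ℓ →
    (β i = true → (ℓ : ℤ) + 2 ≤ f i) ∧ (β i = false → f i ≤ (ℓ : ℤ))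

lemma PatShatters.mono {b : ℕ} {F G : Finset (ι → ℤ)} (h : F ⊆ G) {s : ι → Option (Fin b)}
    (hs : PatShatters F s) : PatShatters G s := fun β => by
  obtain ⟨f, hf, h'⟩ := hs β
  exact ⟨f, h hf, h'⟩

variable [Fintype ι] [DecidableEq ι]

open Classical in
/-- The patterns with `b` levels shattered by `F`. -/
def shatSet (b : ℕ) (F : Finset (ι → ℤ)) : Finset (ι → Option (Fin b)) :=
  univ.filter fun s => PatShatters F s

lemma mem_shatSet {b : ℕ} {F : Finset (ι → ℤ)} {s : ι → Option (Fin b)} :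
    s ∈ shatSet b F ↔ PatShatters F s := by
  simp [shatSet]

lemma card_shatSet_split {b : ℕ} (F : Finset (ι → ℤ)) (i : ι) (ℓ : Fin b) :
    (shatSet b (F.filter fun f => f i ≤ (ℓ : ℤ))).card +
      (shatSet b (F.filter fun f => (ℓ : ℤ) + 2 ≤ f i)).card ≤ (shatSet b F).card := by
  set A := shatSet b (F.filter fun f => f i ≤ (ℓ : ℤ)) with hA
  set B := shatSet b (F.filter fun f => (ℓ : ℤ) + 2 ≤ f i) with hB
  have hnone : ∀ s ∈ A ∩ B, s i = none := by
    intro s hs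
    rw [mem_inter, hA, hB, mem_shatSet, mem_shatSet] at hs
    obtain ⟨h1, h2⟩ := hs
    by_contra hne
    obtain ⟨k, hk⟩ := Option.ne_none_iff_exists'.1 hne
    obtain ⟨f, hf, hf'⟩ := h1 fun _ => true
    obtain ⟨g, hg, hg'⟩ := h2 fun _ => false
    have a1 := (hf' i k hk).1 rfl
    have a2 := (hg' i k hk).2 rfl
    have a3 := (mem_filter.1 hf).2
    have a4 := (mem_filter.1 hg).2
    omega
  have hinj : Set.InjOn (fun s : ι → Option (Fin b) => Function.update s i (some ℓ))
      (A ∩ B : Finset (ι → Option (Fin b))) := by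
    intro s hs t ht hst
    funext j
    by_cases hj : j = i
    · subst hj
      rw [hnone s hs, hnone t ht]
    · have := congrFun hst j
      simpa [Function.update_of_ne hj] using this
  have hdisj : Disjoint (A ∪ B)
      ((A ∩ B).image fun s => Function.update s i (some ℓ)) := by
    rw [Finset.disjoint_left]
    intro t ht ht'
    obtain ⟨s, -, rfl⟩ := mem_image.1 ht'
    rcases mem_union.1 ht with h | h
    · rw [hA, mem_shatSet] at h
      obtain ⟨f, hf, hf'⟩ := h fun _ => true
      have a1 := (hf' i ℓ (by simp)).1 rfl
      have a3 := (mem_filter.1 hf).2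
      omega
    · rw [hB, mem_shatSet] at h
      obtain ⟨f, hf, hf'⟩ := h fun _ => false
      have a1 := (hf' i ℓ (by simp)).2 rfl
      have a3 := (mem_filter.1 hf).2
      omega
  have hsub : (A ∪ B) ∪ ((A ∩ B).image fun s => Function.update s i (some ℓ)) ⊆
      shatSet b F := by
    intro t ht
    rw [mem_shatSet]
    rcases mem_union.1 ht with h | h
    · rcases mem_union.1 h with h | h
      · exact (mem_shatSet.1 h).mono (filter_subset _ _)
      · exact (mem_shatSet.1 h).mono (filter_subset _ _)
    · obtain ⟨s, hs, rfl⟩ := mem_image.1 h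
      rw [mem_inter, hA, hB, mem_shatSet, mem_shatSet] at hs
      intro β
      rcases hβ : β i with _ | _
      · obtain ⟨f, hf, hf'⟩ := hs.1 β
        refine ⟨f, (mem_filter.1 hf).1, fun j k hjk => ?_⟩
        by_cases hj : j = i
        · subst hj
          have hk : ℓ = k := by simpa using hjk
          subst hk
          exact ⟨fun h => by simp [hβ] at h, fun _ => (mem_filter.1 hf).2⟩
        · rw [Function.update_of_ne hj] at hjk
          exact hf' j k hjk
      · obtain ⟨f, hf, hf'⟩ := hs.2 β
        refine ⟨f, (mem_filter.1 hf).1, fun j k hjk => ?_⟩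
        by_cases hj : j = i
        · subst hj
          have hk : ℓ = k := by simpa using hjk
          subst hk
          exact ⟨fun _ => (mem_filter.1 hf).2, fun h => by simp [hβ] at h⟩
        · rw [Function.update_of_ne hj] at hjk
          exact hf' j k hjk
  calc A.card + B.card = (A ∪ B).card + (A ∩ B).card := (card_union_add_card_inter A B).symm
    _ = (A ∪ B).card + ((A ∩ B).image fun s => Function.update s i (some ℓ)).card := by
        rw [card_image_of_injOn hinj]
    _ = _ := (card_union_of_disjoint hdisj).symm
    _ ≤ _ := card_le_card hsub

/-- Among four nested tails, one of two consecutive pairs does not decay faster than the `K`-th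
power. -/
lemma tail_step {K : ℕ} {a₁ a₂ a₃ a₄ : ℝ} (h12 : a₃ ≤ a₂)
    (h4 : 0 ≤ a₃) (h1 : a₁ ≤ 1 / 2) (h0 : 0 ≤ a₁)
    (hK : 1 ≤ a₄ * 2 ^ (K ^ 2)) : a₁ ^ K ≤ a₂ ∨ a₃ ^ K ≤ a₄ := by
  by_contra! h
  obtain ⟨h5, h6⟩ := h
  have h7 : a₃ ≤ (1 / 2) ^ K := (h12.trans h5.le).trans (pow_le_pow_left₀ h0 h1 K)
  have h8 : a₃ ^ K ≤ (1 / 2) ^ (K ^ 2) := by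
    calc a₃ ^ K ≤ ((1 / 2) ^ K) ^ K := pow_le_pow_left₀ h4 h7 K
      _ = _ := by rw [← pow_mul, sq]
  have h9 : a₄ < (1 / 2) ^ (K ^ 2) := h6.trans_le h8
  have : a₄ * 2 ^ (K ^ 2) < (1 / 2) ^ (K ^ 2) * 2 ^ (K ^ 2) :=
    mul_lt_mul_of_pos_right h9 (by positivity)
  rw [← mul_pow] at this
  norm_num at this
  linarith

/-- An integer median of a bounded integer-valued function on a finite set. -/
lemma exists_median {α : Type*} (F : Finset α) (u : α → ℤ) (b : ℕ)
    (hu : ∀ f ∈ F, 0 ≤ u f ∧ u f ≤ b) :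
    ∃ M : ℤ, 2 * (F.filter fun f => M + 1 ≤ u f).card ≤ F.card ∧
      2 * (F.filter fun f => u f ≤ M - 1).card ≤ F.card := by
  by_cases hF : F.card = 0
  · refine ⟨0, ?_, ?_⟩ <;> simp [Finset.card_eq_zero.1 hF]
  have hex : ∃ M : ℤ, F.card ≤ 2 * (F.filter fun f => u f ≤ M).card := by
    refine ⟨b, ?_⟩
    rw [filter_true_of_mem fun f hf => (hu f hf).2]
    omega
  obtain ⟨M, hM, hmin⟩ := Int.exists_least_of_bdd
    (P := fun M : ℤ => F.card ≤ 2 * (F.filter fun f => u f ≤ M).card)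
    ⟨0, fun z hz => by
      by_contra! hlt
      have : F.filter (fun f => u f ≤ z) = ∅ :=
        filter_eq_empty_iff.2 fun f hf h => by have := (hu f hf).1; omega
      rw [this] at hz
      simp at hz
      exact hF (by simp [hz])⟩ hex
  refine ⟨M, ?_, ?_⟩
  · have h1 := card_filter_add_card_filter_not (s := F) (fun f => u f ≤ M)
    have h2 : F.filter (fun f => ¬ u f ≤ M) = F.filter (fun f => M + 1 ≤ u f) :=
      filter_congr fun f _ => by omega
    rw [h2] at h1
    omega
  · by_contra! h
    have := hmin (M - 1) h.le
    omega

lemma exists_coord_of_separated {κ : Type*} [Fintype κ] {F : Finset (κ → ℤ)} {p : ℝ}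
    (hF : 2 ≤ F.card) (hp : 0 < p)
    (hsep : ∀ f ∈ F, ∀ g ∈ F, f ≠ g →
      p * Fintype.card κ ≤ (univ.filter fun i => 8 ≤ |f i - g i|).card) :
    ∃ i, p / 2 * (F.card : ℝ) ^ 2 ≤
      ((F ×ˢ F).filter fun q => 8 ≤ |q.1 i - q.2 i|).card := by
  by_contra! h
  have hι : Nonempty κ := by
    by_contra hne
    rw [not_nonempty_iff] at hne
    have : F.card ≤ 1 := card_le_one.2 fun f _ g _ => Subsingleton.elim f g
    omega
  have hn : (0 : ℝ) < Fintype.card κ := by exact_mod_cast Fintype.card_pos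
  have h1 : ∑ i : κ, (((F ×ˢ F).filter fun q => 8 ≤ |q.1 i - q.2 i|).card : ℝ) <
      ∑ _i : κ, p / 2 * (F.card : ℝ) ^ 2 :=
    sum_lt_sum_of_nonempty univ_nonempty fun i _ => h i
  have h2 : ∑ i : κ, (((F ×ˢ F).filter fun q => 8 ≤ |q.1 i - q.2 i|).card : ℝ) =
      ∑ q ∈ F ×ˢ F, ((univ.filter fun i => 8 ≤ |q.1 i - q.2 i|).card : ℝ) := by
    simp only [card_filter, Nat.cast_sum]
    exact sum_comm
  have h3 : ∑ q ∈ F.offDiag, p * (Fintype.card κ : ℝ) ≤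
      ∑ q ∈ F ×ˢ F, ((univ.filter fun i => 8 ≤ |q.1 i - q.2 i|).card : ℝ) := by
    refine (sum_le_sum fun q hq => ?_).trans
      (sum_le_sum_of_subset_of_nonneg (s := F.offDiag) ?_ fun _ _ _ => by positivity)
    · obtain ⟨a, b, c⟩ := mem_offDiag.1 hq
      exact hsep _ a _ b c
    · intro q hq
      obtain ⟨a, b, -⟩ := mem_offDiag.1 hq
      exact mem_product.2 ⟨a, b⟩
  rw [h2] at h1
  rw [sum_const, offDiag_card, nsmul_eq_mul] at h3
  rw [sum_const, nsmul_eq_mul, card_univ] at h1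
  have h4 : ((F.card * F.card - F.card : ℕ) : ℝ) = (F.card : ℝ) * F.card - F.card := by
    rw [Nat.cast_sub (Nat.le_mul_self _)]
    push_cast
    ring
  rw [h4] at h3
  have h5 : (2 : ℝ) ≤ F.card := by exact_mod_cast hF
  have h6 := h3.trans_lt h1
  have h7 : (0 : ℝ) ≤ (p * Fintype.card κ) * ((F.card : ℝ) * (F.card - 2)) := by
    have : (0 : ℝ) ≤ (F.card : ℝ) - 2 := by linarith
    positivity
  nlinarith

lemma exists_split {κ : Type*} [Fintype κ] {F : Finset (κ → ℤ)} {p : ℝ} {b K : ℕ}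
    (hF : 2 ≤ F.card) (hp : 0 < p)
    (hK : 8 ≤ p * 2 ^ (K ^ 2))
    (hb : ∀ f ∈ F, ∀ i, 0 ≤ f i ∧ f i ≤ b)
    (hsep : ∀ f ∈ F, ∀ g ∈ F, f ≠ g →
      p * Fintype.card κ ≤ (univ.filter fun i => 8 ≤ |f i - g i|).card) :
    ∃ (i : κ) (ℓ : Fin b) (β : ℝ), 0 < β ∧ β ≤ 1 / 2 ∧
      (((1 - β) * F.card ≤ (F.filter fun f => f i ≤ (ℓ : ℤ)).card ∧
        β ^ K * F.card ≤ (F.filter fun f => (ℓ : ℤ) + 2 ≤ f i).card) ∨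
      (β ^ K * F.card ≤ (F.filter fun f => f i ≤ (ℓ : ℤ)).card ∧
        (1 - β) * F.card ≤ (F.filter fun f => (ℓ : ℤ) + 2 ≤ f i).card)) := by
  obtain ⟨i, hi⟩ := exists_coord_of_separated hF hp hsep
  obtain ⟨M, hM1, hM2⟩ := exists_median F (fun f => f i) b fun f hf => hb f hf i
  have hc : (0 : ℝ) < F.card := by
    have : 0 < F.card := by omega
    exact_mod_cast this
  set up : ℤ → ℝ := fun z => (F.filter fun f => z ≤ f i).card with hup
  set dn : ℤ → ℝ := fun z => (F.filter fun f => f i ≤ z).card with hdn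
  have hup_anti : ∀ z w, z ≤ w → up w ≤ up z := fun z w hzw => by
    simp only [hup]
    exact_mod_cast card_le_card (monotone_filter_right F fun f _ (h : w ≤ f i) => hzw.trans h)
  have hdn_mono : ∀ z w, z ≤ w → dn z ≤ dn w := fun z w hzw => by
    simp only [hdn]
    exact_mod_cast card_le_card (monotone_filter_right F fun f _ (h : f i ≤ z) => h.trans hzw)
  have hcompl : ∀ z, dn z + up (z + 1) = F.card := fun z => by
    have h1 := card_filter_add_card_filter_not (s := F) (fun f => f i ≤ z)
    have h2 : F.filter (fun f => ¬ f i ≤ z) = F.filter (fun f => z + 1 ≤ f i) :=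
      filter_congr fun f _ => by omega
    rw [h2] at h1
    simp only [hup, hdn]
    exact_mod_cast h1
  have hup_pos : ∀ z, 0 < up z → z ≤ b := fun z hz => by
    simp only [hup, Nat.cast_pos, card_pos] at hz
    obtain ⟨f, hf⟩ := hz
    exact (mem_filter.1 hf).2.trans (hb f (mem_filter.1 hf).1 i).2
  have hdn_pos : ∀ z, 0 < dn z → 0 ≤ z := fun z hz => by
    simp only [hdn, Nat.cast_pos, card_pos] at hz
    obtain ⟨f, hf⟩ := hz
    exact (hb f (mem_filter.1 hf).1 i).1.trans (mem_filter.1 hf).2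
  have hM1' : up (M + 1) ≤ F.card / 2 := by
    have : (2 * (F.filter fun f => M + 1 ≤ f i).card : ℝ) ≤ F.card := by exact_mod_cast hM1
    simp only [hup]
    linarith
  have hM2' : dn (M - 1) ≤ F.card / 2 := by
    have : (2 * (F.filter fun f => f i ≤ M - 1).card : ℝ) ≤ F.card := by exact_mod_cast hM2
    simp only [hdn]
    linarith
  have hM0 : 0 ≤ M := hdn_pos M (by linarith [hcompl M])
  have hMb : M ≤ b := hup_pos M (by
    have := hcompl (M - 1)
    rw [sub_add_cancel] at this
    linarith)
  have htail : p / 4 * F.card ≤ up (M + 4) + dn (M - 4) := by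
    set E := F.filter fun f => M + 4 ≤ f i ∨ f i ≤ M - 4 with hE
    have h1 : (E.card : ℝ) ≤ up (M + 4) + dn (M - 4) := by
      simp only [hup, hdn, hE, filter_or]
      exact_mod_cast card_union_le _ _
    have h2 : ((F ×ˢ F).filter fun q => 8 ≤ |q.1 i - q.2 i|) ⊆ (E ×ˢ F) ∪ (F ×ˢ E) := by
      intro q hq
      obtain ⟨hq1, hq2⟩ := mem_filter.1 hq
      obtain ⟨ha, hb'⟩ := mem_product.1 hq1
      simp only [mem_union, mem_product, hE, mem_filter, ha, hb', true_and, and_true]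
      rcases le_abs.1 hq2 with h | h <;> omega
    have h3 : (((F ×ˢ F).filter fun q => 8 ≤ |q.1 i - q.2 i|).card : ℝ) ≤
        E.card * F.card + F.card * E.card := by
      have := (card_le_card h2).trans (card_union_le _ _)
      rw [card_product, card_product] at this
      exact_mod_cast this
    have h4 := hi.trans h3
    have h5 : F.card * (p / 4 * F.card) ≤ (F.card : ℝ) * E.card := by nlinarith
    exact (le_of_mul_le_mul_left h5 hc).trans h1
  have hnn : ∀ z, 0 ≤ up z := fun z => by simp only [hup]; positivity
  have hnn' : ∀ z, 0 ≤ dn z := fun z => by simp only [hdn]; positivity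
  have key : ∀ a₁ a₂ a₃ a₄ : ℝ, a₃ ≤ a₂ → 0 ≤ a₃ → 0 ≤ a₁ → a₁ ≤ F.card / 2 →
      p / 8 * F.card ≤ a₄ →
      (a₁ / F.card) ^ K * F.card ≤ a₂ ∨ (a₃ / F.card) ^ K * F.card ≤ a₄ := by
    intro a₁ a₂ a₃ a₄ h1 h2 h3 h4 h5
    have := tail_step (K := K) (a₁ := a₁ / F.card) (a₂ := a₂ / F.card) (a₃ := a₃ / F.card)
      (a₄ := a₄ / F.card) (by gcongr) (by positivity)
      (by rw [div_le_iff₀ hc]; linarith) (by positivity) (by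
        have : p / 8 ≤ a₄ / F.card := by rwa [le_div_iff₀ hc]
        have h6 : p / 8 * 2 ^ (K ^ 2) ≤ a₄ / F.card * 2 ^ (K ^ 2) := by gcongr
        linarith)
    rwa [le_div_iff₀ hc, le_div_iff₀ hc] at this
  have hp8 : 0 < p / 8 * F.card := by positivity
  have hor : p / 8 * F.card ≤ up (M + 4) ∨ p / 8 * F.card ≤ dn (M - 4) := by
    by_contra! h
    linarith [h.1, h.2]
  rcases hor with h | h
  · have hb4 := hup_pos (M + 4) (hp8.trans_le h)
    have u34 := hup_anti (M + 3) (M + 4) (by omega)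
    have u23 := hup_anti (M + 2) (M + 3) (by omega)
    have u12 := hup_anti (M + 1) (M + 2) (by omega)
    rcases key (up (M + 1)) (up (M + 2)) (up (M + 3)) (up (M + 4)) u23 (hnn _) (hnn _) hM1' h
      with h' | h'
    · refine ⟨i, ⟨M.toNat, by omega⟩, up (M + 1) / F.card, div_pos (by linarith) hc,
        by rw [div_le_iff₀ hc]; linarith, Or.inl ?_⟩
      simp only [Int.toNat_of_nonneg hM0]
      refine ⟨?_, h'⟩
      rw [sub_mul, div_mul_cancel₀ _ hc.ne']
      linarith [hcompl M]
    · refine ⟨i, ⟨(M + 2).toNat, by omega⟩, up (M + 3) / F.card, div_pos (by linarith) hc,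
        by rw [div_le_iff₀ hc]; linarith, Or.inl ?_⟩
      simp only [Int.toNat_of_nonneg (show 0 ≤ M + 2 by omega), add_assoc]
      norm_num only
      refine ⟨?_, h'⟩
      rw [sub_mul, div_mul_cancel₀ _ hc.ne']
      have := hcompl (M + 2)
      rw [add_assoc] at this
      norm_num only at this
      linarith
  · have hb4 := hdn_pos (M - 4) (hp8.trans_le h)
    have u34 := hdn_mono (M - 4) (M - 3) (by omega)
    have u23 := hdn_mono (M - 3) (M - 2) (by omega)
    have u12 := hdn_mono (M - 2) (M - 1) (by omega)
    rcases key (dn (M - 1)) (dn (M - 2)) (dn (M - 3)) (dn (M - 4)) u23 (hnn' _) (hnn' _) hM2' h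
      with h' | h'
    · refine ⟨i, ⟨(M - 2).toNat, by omega⟩, dn (M - 1) / F.card, div_pos (by linarith) hc,
        by rw [div_le_iff₀ hc]; linarith, Or.inr ?_⟩
      simp only [Int.toNat_of_nonneg (show 0 ≤ M - 2 by omega), sub_add_cancel]
      refine ⟨h', ?_⟩
      rw [sub_mul, div_mul_cancel₀ _ hc.ne']
      have := hcompl (M - 1)
      rw [sub_add_cancel] at this
      linarith
    · refine ⟨i, ⟨(M - 4).toNat, by omega⟩, dn (M - 3) / F.card, div_pos (by linarith) hc,
        by rw [div_le_iff₀ hc]; linarith, Or.inr ?_⟩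
      have e1 : M - 4 + 2 = M - 2 := by ring
      simp only [Int.toNat_of_nonneg hb4, e1]
      refine ⟨h', ?_⟩
      rw [sub_mul, div_mul_cancel₀ _ hc.ne']
      have := hcompl (M - 3)
      rw [show M - 3 + 1 = M - 2 by ring] at this
      linarith

/-- A class whose members are pairwise separated on a fraction `p` of the coordinates shatters at
least `|F| ^ (1 / K)` patterns, where `K` is of order `√(log (1 / p))`. -/
lemma card_le_card_shatSet_pow {p : ℝ} {b K : ℕ} (hp : 0 < p) (hK1 : 1 ≤ K)
    (hK : 8 ≤ p * 2 ^ (K ^ 2)) (F : Finset (ι → ℤ))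
    (hb : ∀ f ∈ F, ∀ i, 0 ≤ f i ∧ f i ≤ b)
    (hsep : ∀ f ∈ F, ∀ g ∈ F, f ≠ g →
      p * Fintype.card ι ≤ (univ.filter fun i => 8 ≤ |f i - g i|).card) :
    (F.card : ℝ) ≤ ((shatSet b F).card : ℝ) ^ K := by
  induction hN : F.card using Nat.strong_induction_on generalizing F with
  | _ N ih =>
  subst hN
  rcases Nat.lt_or_ge F.card 2 with h2 | h2
  · rcases Nat.eq_zero_or_pos F.card with h0 | h0
    · rw [h0]
      simp
    · have h1 : F.card = 1 := by omega
      rw [h1, Nat.cast_one]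
      apply one_le_pow₀
      have : 0 < (shatSet b F).card := by
        obtain ⟨f, hf⟩ := card_pos.1 h0
        exact card_pos.2 ⟨fun _ => none, mem_shatSet.2 fun _ => ⟨f, hf, by simp⟩⟩
      exact_mod_cast this
  obtain ⟨i, ℓ, β, hβ0, hβ1, hcase⟩ := exists_split h2 hp hK hb hsep
  have hc : (0 : ℝ) < F.card := by
    have : 0 < F.card := by omega
    exact_mod_cast this
  set lo := F.filter fun f => f i ≤ (ℓ : ℤ) with hlo
  set hi := F.filter fun f => (ℓ : ℤ) + 2 ≤ f i with hhi
  have hpos : 0 < (1 - β) * F.card := mul_pos (by linarith) hc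
  have hpos' : 0 < β ^ K * F.card := by positivity
  have hloc : 0 < lo.card := by
    have : (0 : ℝ) < lo.card := by rcases hcase with h | h <;> linarith [h.1]
    exact_mod_cast this
  have hhic : 0 < hi.card := by
    have : (0 : ℝ) < hi.card := by rcases hcase with h | h <;> linarith [h.2]
    exact_mod_cast this
  have hdisj : Disjoint lo hi := by
    rw [Finset.disjoint_left]
    intro f h1 h2
    have a1 := (mem_filter.1 h1).2
    have a2 := (mem_filter.1 h2).2
    omega
  have hsum : lo.card + hi.card ≤ F.card := by
    rw [← card_union_of_disjoint hdisj]
    exact card_le_card (union_subset (filter_subset _ _) (filter_subset _ _))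
  have ihlo := ih lo.card (by omega) lo (fun f hf => hb f (mem_filter.1 hf).1)
    (fun f hf g hg => hsep f (mem_filter.1 hf).1 g (mem_filter.1 hg).1) rfl
  have ihhi := ih hi.card (by omega) hi (fun f hf => hb f (mem_filter.1 hf).1)
    (fun f hf g hg => hsep f (mem_filter.1 hf).1 g (mem_filter.1 hg).1) rfl
  have hS : ((shatSet b lo).card : ℝ) + (shatSet b hi).card ≤ (shatSet b F).card := by
    exact_mod_cast card_shatSet_split F i ℓ
  set y : ℝ := (F.card : ℝ) ^ ((K : ℝ)⁻¹) with hy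
  have hy0 : 0 ≤ y := by positivity
  have hyK : y ^ K = F.card := Real.rpow_inv_natCast_pow hc.le (by omega)
  have hbig : ∀ S : ℝ, 0 ≤ S → (1 - β) * F.card ≤ S ^ K → (1 - β) * y ≤ S := by
    intro S hS h
    refine le_of_pow_le_pow_left₀ (by omega : K ≠ 0) hS (le_trans ?_ h)
    rw [mul_pow, hyK]
    gcongr
    exact pow_le_of_le_one (by linarith) (by linarith) (by omega)
  have hsmall : ∀ S : ℝ, 0 ≤ S → β ^ K * F.card ≤ S ^ K → β * y ≤ S := by
    intro S hS h
    refine le_of_pow_le_pow_left₀ (by omega : K ≠ 0) hS (le_trans ?_ h)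
    rw [mul_pow, hyK]
  have hfin : y ≤ (shatSet b F).card := by
    rcases hcase with ⟨h1, h3⟩ | ⟨h1, h3⟩
    · have := hbig _ (Nat.cast_nonneg _) (h1.trans ihlo)
      have := hsmall _ (Nat.cast_nonneg _) (h3.trans ihhi)
      linarith
    · have := hsmall _ (Nat.cast_nonneg _) (h1.trans ihlo)
      have := hbig _ (Nat.cast_nonneg _) (h3.trans ihhi)
      linarith
  rw [← hyK]
  exact pow_le_pow_left₀ hy0 hfin K

/-- The coordinates at which a pattern prescribes something. -/
def supp {b : ℕ} (s : ι → Option (Fin b)) : Finset ι := univ.filter fun i => s i ≠ none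

/-- Few patterns have small support. -/
lemma card_patterns_le {b : ℕ} {D : ℝ} (hD : 0 < D) (hDn : D ≤ Fintype.card ι * b)
    (S : Finset (ι → Option (Fin b))) (hS : ∀ s ∈ S, ((supp s).card : ℝ) ≤ D) :
    (S.card : ℝ) ≤ Real.exp (D * Real.log (Real.exp 1 * Fintype.card ι * b / D)) := by
  set n : ℝ := (Fintype.card ι : ℝ) with hn
  have hnb : 0 < n * b := hD.trans_le hDn
  set x : ℝ := D / (n * b) with hx
  have hx0 : 0 < x := by positivity
  have hx1 : x ≤ 1 := (div_le_one hnb).2 hDn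
  have h1 : ∑ s : ι → Option (Fin b), x ^ (supp s).card = (1 + b * x) ^ Fintype.card ι := by
    have : ∀ s : ι → Option (Fin b), x ^ (supp s).card =
        ∏ i, (if s i ≠ none then x else 1) := by
      intro s
      rw [supp, ← prod_const, prod_filter]
    have hps : ∏ _i : ι, ∑ o : Option (Fin b), (if o ≠ none then x else 1) =
        ∑ s : ι → Option (Fin b), ∏ i, (if s i ≠ none then x else 1) :=
      Fintype.prod_sum fun (_ : ι) (o : Option (Fin b)) => if o ≠ none then x else 1
    rw [sum_congr rfl fun s _ => this s, ← hps]
    simp [Fintype.sum_option]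
  have h2 : (S.card : ℝ) * x ^ D ≤ Real.exp D := by
    calc (S.card : ℝ) * x ^ D = ∑ s ∈ S, x ^ D := by rw [sum_const, nsmul_eq_mul]
      _ ≤ ∑ s ∈ S, x ^ (supp s).card := by
          refine sum_le_sum fun s hs => ?_
          rw [← Real.rpow_natCast]
          exact Real.rpow_le_rpow_of_exponent_ge hx0 hx1 (hS s hs)
      _ ≤ ∑ s : ι → Option (Fin b), x ^ (supp s).card :=
          sum_le_sum_of_subset_of_nonneg (subset_univ _) fun _ _ _ => by positivity
      _ = (1 + b * x) ^ Fintype.card ι := h1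
      _ ≤ Real.exp (b * x) ^ Fintype.card ι := by
          gcongr
          linarith [Real.add_one_le_exp (b * x)]
      _ = Real.exp D := by
          rw [← Real.exp_nat_mul]
          congr 1
          rw [hx, ← hn]
          have hb : (b : ℝ) ≠ 0 := fun h => by simp [h] at hnb
          have hn0 : n ≠ 0 := fun h => by simp [h] at hnb
          field_simp
  have h3 : Real.exp 1 * n * b / D = Real.exp 1 / x := by
    rw [hx]
    field_simp
  rw [h3, Real.log_div (Real.exp_pos 1).ne' hx0.ne', Real.log_exp, mul_sub, mul_one,
    Real.exp_sub, mul_comm D, ← Real.rpow_def_of_pos hx0, le_div_iff₀ (by positivity)]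
  exact h2

/-- Entropy bound for real-valued classes on a finite set that are pairwise `t`-separated on a
fraction `p` of the coordinates. -/
lemma log_card_le_of_separated {F : Finset (ι → ℝ)} {p c θ t D : ℝ} {b K : ℕ} (hp : 0 < p)
    (hK1 : 1 ≤ K) (hK : 8 ≤ p * 2 ^ (K ^ 2)) (hθ : 0 < θ) (ht : 9 * θ ≤ t)
    (hb : 2 * c / θ < b + 1) (hF : ∀ f ∈ F, ∀ i, |f i| ≤ c)
    (hsep : ∀ f ∈ F, ∀ g ∈ F, f ≠ g →
      p * Fintype.card ι ≤ (univ.filter fun i => t ≤ |f i - g i|).card)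
    (hD : 0 < D) (hDn : D ≤ Fintype.card ι * b)
    (hfat : ∀ (k : ℕ) (x : Fin k → ι) (r : Fin k → ℝ),
      FatShatters (F : Set (ι → ℝ)) (θ / 2) x r → (k : ℝ) ≤ D) :
    Real.log F.card ≤ K * (D * Real.log (Real.exp 1 * Fintype.card ι * b / D)) := by
  have hι : (0 : ℝ) < Fintype.card ι := by
    by_contra h
    have h0 : (Fintype.card ι : ℝ) = 0 := le_antisymm (not_lt.1 h) (Nat.cast_nonneg _)
    rw [h0, zero_mul] at hDn
    linarith
  set q : (ι → ℝ) → ι → ℤ := fun f i => ⌊(f i + c) / θ⌋ with hq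
  have hgap : ∀ u v : ℝ, t ≤ |u - v| → (8 : ℤ) ≤ |⌊(u + c) / θ⌋ - ⌊(v + c) / θ⌋| := by
    have key : ∀ u v : ℝ, t ≤ u - v → (8 : ℤ) ≤ ⌊(u + c) / θ⌋ - ⌊(v + c) / θ⌋ := by
      intro u v huv
      have h1 : (v + c) / θ + 9 ≤ (u + c) / θ := by
        rw [div_add' _ _ _ hθ.ne']
        exact div_le_div_of_nonneg_right (by linarith) hθ.le
      have h2 := Int.floor_le ((v + c) / θ)
      have h3 := Int.lt_floor_add_one ((u + c) / θ)
      have h4 : ((⌊(v + c) / θ⌋ + 8 : ℤ) : ℝ) < (⌊(u + c) / θ⌋ + 1 : ℤ) := by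
        push_cast
        linarith
      have := Int.cast_lt.1 h4
      omega
    intro u v huv
    rcases le_abs.1 huv with h | h
    · exact (key u v h).trans (le_abs_self _)
    · rw [abs_sub_comm]
      exact (key v u (by linarith)).trans (le_abs_self _)
  have hsepq : ∀ f ∈ F, ∀ g ∈ F, f ≠ g →
      p * Fintype.card ι ≤ (univ.filter fun i => 8 ≤ |q f i - q g i|).card := by
    intro f hf g hg hfg
    refine (hsep f hf g hg hfg).trans ?_
    exact_mod_cast card_le_card (monotone_filter_right univ fun i _ h => hgap _ _ h)
  have hinj : Set.InjOn q F := by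
    intro f hf g hg hfg
    by_contra hne
    have := hsepq f hf g hg hne
    rw [hfg] at this
    simp only [sub_self, abs_zero] at this
    norm_num at this
    nlinarith [mul_pos hp hι]
  have h1 := card_le_card_shatSet_pow (b := b) hp hK1 hK (F.image q) (by
    intro f hf i
    obtain ⟨g, hg, rfl⟩ := mem_image.1 hf
    have h1 := abs_le.1 (hF g hg i)
    refine ⟨Int.floor_nonneg.2 (div_nonneg (by linarith) hθ.le), ?_⟩
    have h2 : (g i + c) / θ < ((b + 1 : ℤ) : ℝ) := by
      push_cast
      refine lt_of_le_of_lt ?_ hb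
      gcongr
      linarith
    have := Int.floor_lt.2 h2
    simp only [hq]
    omega) (by
    intro f hf g hg hfg
    obtain ⟨f', hf', rfl⟩ := mem_image.1 hf
    obtain ⟨g', hg', rfl⟩ := mem_image.1 hg
    exact hsepq f' hf' g' hg' fun h => hfg (by rw [h]))
  rw [card_image_of_injOn hinj] at h1
  have h2 := card_patterns_le hD hDn (shatSet b (F.image q)) (by
    intro s hs
    rw [mem_shatSet] at hs
    have hsome : ∀ i : supp s, ∃ ℓ, s i = some ℓ := fun i =>
      Option.ne_none_iff_exists'.1 (mem_filter.1 i.2).2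
    choose lev hlev using hsome
    set e := (supp s).equivFin
    refine hfat _ (fun j => (e.symm j : ι))
      (fun j => -c + ((lev (e.symm j) : ℕ) + 3 / 2) * θ) fun β => ?_
    obtain ⟨f', hf', hf''⟩ := hs fun i => if h : i ∈ supp s then β (e ⟨i, h⟩) else true
    obtain ⟨f, hf, rfl⟩ := mem_image.1 hf'
    refine ⟨f, hf, fun j => ?_⟩
    have := hf'' (e.symm j) _ (hlev (e.symm j))
    simp only [coe_mem, dite_true, Subtype.coe_eta, Equiv.apply_symm_apply] at this
    refine ⟨fun hj => ?_, fun hj => ?_⟩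
    · have h3 := Int.le_floor.1 (this.1 hj)
      rw [le_div_iff₀ hθ] at h3
      push_cast at h3
      linarith
    · have h3 := Int.floor_le_iff.1 (this.2 hj)
      rw [div_lt_iff₀ hθ] at h3
      push_cast at h3
      linarith)
  rcases Nat.eq_zero_or_pos F.card with h0 | h0
  · rw [h0, Nat.cast_zero, Real.log_zero]
    refine mul_nonneg (Nat.cast_nonneg _) (mul_nonneg hD.le (Real.log_nonneg ?_))
    rw [le_div_iff₀ hD, mul_assoc]
    nlinarith [Real.add_one_le_exp (1 : ℝ)]
  · have h0' : (0 : ℝ) < F.card := by exact_mod_cast h0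
    rw [Real.log_le_iff_le_exp h0', Real.exp_nat_mul]
    exact h1.trans (pow_le_pow_left₀ (Nat.cast_nonneg _) h2 K)

/-- A random tuple hits every set of density at least `p` with frequency at least `p / 4`. -/
lemma exists_sample {s : ℕ} {p : ℝ} (hp : 0 ≤ p) [Nonempty ι] (𝒜 : Finset (Finset ι))
    (hA : ∀ A ∈ 𝒜, p * Fintype.card ι ≤ A.card)
    (hcard : (𝒜.card : ℝ) < Real.exp (3 / 8 * (p * s))) :
    ∃ φ : Fin s → ι, ∀ A ∈ 𝒜, p / 4 * s ≤ (univ.filter fun j => φ j ∈ A).card := by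
  by_contra! h
  have hn : (0 : ℝ) < Fintype.card ι := by exact_mod_cast Fintype.card_pos
  have hE : Real.exp (-1) ≤ 3 / 8 := by
    rw [Real.exp_neg, inv_le_comm₀ (Real.exp_pos 1) (by norm_num)]
    linarith [Real.exp_one_gt_d9]
  have h1 : ∀ A ∈ 𝒜, ∑ φ : Fin s → ι,
      Real.exp (p / 4 * s - (univ.filter fun j => φ j ∈ A).card) ≤
      (Fintype.card ι : ℝ) ^ s * Real.exp (-(3 / 8 * (p * s))) := by
    intro A hAm
    have e1 : ∀ φ : Fin s → ι, Real.exp (p / 4 * s - (univ.filter fun j => φ j ∈ A).card) =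
        Real.exp (p / 4 * s) *
          ∏ j, (if φ j ∈ A then Real.exp (-1) else 1) := by
      intro φ
      rw [← prod_filter, prod_const, ← Real.exp_nat_mul, ← Real.exp_add]
      congr 1
      ring
    rw [sum_congr rfl fun φ _ => e1 φ, ← mul_sum,
      ← Fintype.sum_pow fun i : ι => if i ∈ A then Real.exp (-1) else 1]
    have e2 : ∑ i : ι, (if i ∈ A then Real.exp (-1) else 1) ≤
        Fintype.card ι * Real.exp (-(5 / 8 * p)) := by
      have e3 : ∑ i : ι, (if i ∈ A then Real.exp (-1) else (1 : ℝ)) =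
          Fintype.card ι - (1 - Real.exp (-1)) * A.card := by
        have : ∀ i : ι, (if i ∈ A then Real.exp (-1) else (1 : ℝ)) =
            1 - (1 - Real.exp (-1)) * (if i ∈ A then 1 else 0) := by
          intro i
          split_ifs <;> ring
        rw [sum_congr rfl fun i _ => this i, sum_sub_distrib, ← mul_sum]
        simp
      rw [e3]
      have e4 : 1 - 5 / 8 * p ≤ Real.exp (-(5 / 8 * p)) := by
        linarith [Real.add_one_le_exp (-(5 / 8 * p))]
      have e5 := hA A hAm
      have e6 : 5 / 8 * (p * Fintype.card ι) ≤ (1 - Real.exp (-1)) * A.card := by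
        apply mul_le_mul (by linarith) e5 (by positivity) (by linarith)
      nlinarith
    calc Real.exp (p / 4 * s) * (∑ i : ι, (if i ∈ A then Real.exp (-1) else 1)) ^ s
        ≤ Real.exp (p / 4 * s) * (Fintype.card ι * Real.exp (-(5 / 8 * p))) ^ s := by
          gcongr
      _ = _ := by
          rw [mul_pow, ← Real.exp_nat_mul, mul_left_comm, ← Real.exp_add]
          congr 2
          ring
  have h2 : ∑ _φ : Fin s → ι, (1 : ℝ) ≤ ∑ φ : Fin s → ι, ∑ A ∈ 𝒜,
      Real.exp (p / 4 * s - (univ.filter fun j => φ j ∈ A).card) := by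
    refine sum_le_sum fun φ _ => ?_
    obtain ⟨A, hAm, hlt⟩ := h φ
    refine le_trans ?_ (single_le_sum (f := fun A =>
      Real.exp (p / 4 * s - (univ.filter fun j => φ j ∈ A).card))
      (fun _ _ => (Real.exp_pos _).le) hAm)
    exact Real.one_le_exp (by linarith)
  rw [sum_comm] at h2
  have h3 := h2.trans (sum_le_sum h1)
  simp only [sum_const, card_univ, Fintype.card_fun, Fintype.card_fin, nsmul_eq_mul, mul_one,
    Nat.cast_pow] at h3
  have h4 : (𝒜.card : ℝ) * Real.exp (-(3 / 8 * (p * s))) < 1 := by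
    rw [Real.exp_neg, ← div_eq_mul_inv, div_lt_one (Real.exp_pos _)]
    exact hcard
  have h5 : (0 : ℝ) < (Fintype.card ι : ℝ) ^ s := by positivity
  nlinarith

/-- Solving the implicit inequality for the entropy `M`. -/
lemma le_of_le_mul_log {δ d M s b K w : ℝ} (hδ : 0 < δ) (hd' : 1 ≤ d) (hMd : d < M) (hs0 : 0 < s)
    (hs2 : s ≤ 52 * M / δ ^ 2) (hb3 : 1 ≤ b) (hb1 : b ≤ 36 / δ) (hw0 : 0 < w)
    (hww : w * w = 1 / δ) (hw7 : 7 / 10 ≤ w) (hK0 : 0 < K) (hK2 : K ≤ 12 * w)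
    (main : M ≤ K * (d * Real.log (Real.exp 1 * s * b / d))) : M ≤ 700 * d / δ := by
  set y : ℝ := M / d with hy
  have hy1 : 1 < y := by
    rw [hy, lt_div_iff₀ (by linarith)]
    linarith
  have hMy : M = d * y := by
    rw [hy]
    field_simp
  have hlog : Real.log (Real.exp 1 * s * b / d) ≤ 13 + 7 * w + y / (2 * K) := by
    have h1 : Real.exp 1 * s * b / d ≤ 5100 * (y * (w ^ 6)) := by
      have e1 : Real.exp 1 ≤ 2.7183 := by linarith [Real.exp_one_lt_d9]
      have e2 : w ^ 6 = 1 / δ ^ 3 := by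
        have : w ^ 6 = (w * w) ^ 3 := by ring
        rw [this, hww]
        ring
      have e3 : Real.exp 1 * s * b / d ≤ 2.7183 * (52 * M / δ ^ 2) * (36 / δ) / d := by
        have : 0 < M := by linarith
        gcongr
      refine e3.trans ?_
      rw [e2, hMy]
      have : 2.7183 * (52 * (d * y) / δ ^ 2) * (36 / δ) / d =
          (2.7183 * 52 * 36) * (y * (1 / δ ^ 3)) := by
        field_simp
      rw [this]
      gcongr
      norm_num
    have h2 : Real.log (Real.exp 1 * s * b / d) ≤ Real.log (5100 * (y * (w ^ 6))) :=
      Real.log_le_log (by positivity) h1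
    rw [Real.log_mul (by norm_num) (by positivity), Real.log_mul (by positivity) (by positivity),
      Real.log_pow] at h2
    have h3 : Real.log 5100 ≤ 9 := by
      rw [Real.log_le_iff_le_exp (by norm_num)]
      have : Real.exp 9 = Real.exp 1 ^ 9 := by
        rw [← Real.exp_nat_mul]
        norm_num
      rw [this]
      calc (5100 : ℝ) ≤ 2.7 ^ 9 := by norm_num
        _ ≤ _ := by
          gcongr
          linarith [Real.exp_one_gt_d9]
    have h4 : Real.log w ≤ w := by linarith [Real.log_le_sub_one_of_pos hw0]
    have h5 : Real.log y ≤ y / (2 * K) + 4 + w := by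
      have e1 : Real.log (y / (2 * K)) ≤ y / (2 * K) := by
        linarith [Real.log_le_sub_one_of_pos (show 0 < y / (2 * K) by positivity)]
      rw [Real.log_div (by positivity) (by positivity)] at e1
      have e2 : Real.log (2 * K) ≤ Real.log (24 * w) :=
        Real.log_le_log (by positivity) (by linarith)
      rw [Real.log_mul (by norm_num : (24 : ℝ) ≠ 0) (by positivity)] at e2
      have e3 : Real.log 24 ≤ 4 := by
        rw [Real.log_le_iff_le_exp (by norm_num)]
        have : Real.exp 4 = Real.exp 1 ^ 4 := by
          rw [← Real.exp_nat_mul]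
          norm_num
        rw [this]
        calc (24 : ℝ) ≤ 2.7 ^ 4 := by norm_num
          _ ≤ _ := by
            gcongr
            linarith [Real.exp_one_gt_d9]
      linarith
    push_cast at h2
    linarith
  have h6 : d * y ≤ d * (K * (13 + 7 * w + y / (2 * K))) := by
    rw [← hMy]
    refine main.trans ?_
    rw [mul_left_comm]
    gcongr
  have h7 := le_of_mul_le_mul_left h6 (by linarith)
  have h8 : K * (13 + 7 * w + y / (2 * K)) = K * (13 + 7 * w) + y / 2 := by
    field_simp
  rw [h8] at h7
  have h9 : K * (13 + 7 * w) ≤ 12 * w * (26 * w) := by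
    apply mul_le_mul hK2 (by linarith) (by positivity) (by positivity)
  have h10 : y ≤ 700 * (w * w) := by nlinarith
  rw [hww] at h10
  rw [hMy]
  calc d * y ≤ d * (700 * (1 / δ)) := by gcongr
    _ = _ := by ring

/-- Dimension-free entropy bound for `L²`-separated classes. -/
lemma log_card_le_of_l2_separated {F : Finset (ι → ℝ)} {δ : ℝ} {d : ℕ} (hδ : 0 < δ) (hδ2 : δ ≤ 2)
    (hd : 1 ≤ d) (hF : ∀ f ∈ F, ∀ i, |f i| ≤ 1)
    (hsep : ∀ f ∈ F, ∀ g ∈ F, f ≠ g → δ ^ 2 * Fintype.card ι < ∑ i, (f i - g i) ^ 2)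
    (hfat : ∀ (k : ℕ) (x : Fin k → ι) (r : Fin k → ℝ),
      FatShatters (F : Set (ι → ℝ)) (δ / 36) x r → k ≤ d) :
    Real.log F.card ≤ 700 * d / δ := by
  set M := Real.log F.card with hM
  have hd' : (1 : ℝ) ≤ d := by exact_mod_cast hd
  rcases le_or_gt M d with hMd | hMd
  · rw [le_div_iff₀ hδ]
    nlinarith
  have hM1 : 1 < M := hd'.trans_lt hMd
  have hFc : (1 : ℝ) < F.card := by
    by_contra! h
    have := Real.log_nonpos (Nat.cast_nonneg _) h
    linarith
  have hFexp : (F.card : ℝ) = Real.exp M := (Real.exp_log (by linarith)).symm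
  obtain ⟨f₀, hf₀, g₀, hg₀, hfg₀⟩ := one_lt_card.1 (by exact_mod_cast hFc : 1 < F.card)
  have hι : Nonempty ι := by
    by_contra hne
    rw [not_nonempty_iff] at hne
    exact hfg₀ (Subsingleton.elim _ _)
  set p : ℝ := δ ^ 2 / 8 with hp
  have hp0 : 0 < p := by positivity
  have hp1 : p ≤ 1 / 2 := by
    rw [hp]
    nlinarith
  set S : (ι → ℝ) × (ι → ℝ) → Finset ι := fun q => univ.filter fun i => δ / 2 ≤ |q.1 i - q.2 i|
    with hS
  have hSbig : ∀ q ∈ F.offDiag, p * Fintype.card ι ≤ (S q).card := by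
    intro q hq
    obtain ⟨h1, h2, h3⟩ := mem_offDiag.1 hq
    have h4 := hsep _ h1 _ h2 h3
    have h5 : ∑ i, (q.1 i - q.2 i) ^ 2 ≤ ∑ i, (δ ^ 2 / 4 + if i ∈ S q then 4 else 0) := by
      refine sum_le_sum fun i _ => ?_
      rw [← sq_abs]
      have h6 := hF _ h1 i
      have h7 := hF _ h2 i
      have h8 : |q.1 i - q.2 i| ≤ 2 := (abs_sub _ _).trans (by linarith)
      have h9 := abs_nonneg (q.1 i - q.2 i)
      split_ifs with h
      · nlinarith
      · have : |q.1 i - q.2 i| < δ / 2 := by simpa [hS] using h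
        nlinarith
    rw [sum_add_distrib, sum_const, card_univ, nsmul_eq_mul, ← sum_filter, sum_const,
      filter_mem_eq_inter, univ_inter, nsmul_eq_mul] at h5
    rw [hp]
    nlinarith [Nat.cast_nonneg (α := ℝ) (Fintype.card ι), sq_nonneg δ,
      mul_nonneg (sq_nonneg δ) (Nat.cast_nonneg (α := ℝ) (Fintype.card ι))]
  set s : ℕ := ⌈6 * M / p⌉₊ with hs
  have hs1 : 6 * M / p ≤ s := Nat.le_ceil _
  have hs2 : (s : ℝ) ≤ 52 * M / δ ^ 2 := by
    have h1 : (s : ℝ) < 6 * M / p + 1 := Nat.ceil_lt_add_one (by positivity)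
    have h2 : 6 * M / p = 48 * M / δ ^ 2 := by
      rw [hp]
      field_simp
      norm_num
    have h3 : 1 ≤ 4 * M / δ ^ 2 := by
      rw [le_div_iff₀ (by positivity)]
      nlinarith
    have h4 : 52 * M / δ ^ 2 = 48 * M / δ ^ 2 + 4 * M / δ ^ 2 := by ring
    linarith
  have hsp : 6 * M ≤ p * s := by
    rw [div_le_iff₀ hp0] at hs1
    linarith
  have hs0 : (0 : ℝ) < s := by nlinarith
  obtain ⟨φ, hφ⟩ := exists_sample (s := s) hp0.le (F.offDiag.image S)
    (by
      intro A hA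
      obtain ⟨q, hq, rfl⟩ := mem_image.1 hA
      exact hSbig q hq)
    (by
      have h1 : ((F.offDiag.image S).card : ℝ) ≤ F.card * F.card := by
        have := card_image_le (s := F.offDiag) (f := S)
        rw [offDiag_card] at this
        exact_mod_cast this.trans (Nat.sub_le _ _)
      refine h1.trans_lt ?_
      rw [hFexp, ← Real.exp_add, Real.exp_lt_exp]
      linarith)
  have hφsep : ∀ f ∈ F, ∀ g ∈ F, f ≠ g → p / 4 * s ≤
      (univ.filter fun j => δ / 2 ≤ |(f ∘ φ) j - (g ∘ φ) j|).card := by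
    intro f hf g hg hfg
    have := hφ (S (f, g)) (mem_image_of_mem _ (mem_offDiag.2 ⟨hf, hg, hfg⟩))
    simpa [hS] using this
  have hinj : Set.InjOn (fun f : ι → ℝ => f ∘ φ) F := by
    intro f hf g hg hfg
    by_contra hne
    have h1 := hφsep f hf g hg hne
    have hfg' : f ∘ φ = g ∘ φ := hfg
    rw [hfg'] at h1
    simp only [sub_self, abs_zero] at h1
    rw [filter_false_of_mem (by intros; linarith)] at h1
    simp only [card_empty, Nat.cast_zero] at h1
    nlinarith [mul_pos hp0 hs0]
  set w : ℝ := 1 / √δ with hw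
  have hsq : √δ * √δ = δ := Real.mul_self_sqrt hδ.le
  have hsq0 : 0 < √δ := Real.sqrt_pos.2 hδ
  have hw0 : 0 < w := by positivity
  have hww : w * w = 1 / δ := by
    rw [hw, div_mul_div_comm, hsq, one_mul]
  have hw7 : 7 / 10 ≤ w := by
    have h1 : 1 / 2 ≤ w * w := by
      rw [hww]
      exact one_div_le_one_div_of_le hδ hδ2
    nlinarith
  set K : ℕ := ⌈4 * w⌉₊ + 4 with hKdef
  have hK1 : 4 * w ≤ K := by
    have := Nat.le_ceil (4 * w)
    push_cast [hKdef]
    linarith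
  have hK2 : (K : ℝ) ≤ 12 * w := by
    have := Nat.ceil_lt_add_one (show 0 ≤ 4 * w by positivity)
    push_cast [hKdef]
    linarith
  have hKpow : 8 ≤ p / 4 * 2 ^ (K ^ 2) := by
    have h1 : (K : ℝ) ^ 4 ≤ 2 ^ (K ^ 2) := by
      have h2 : K ^ 4 ≤ 2 ^ (K ^ 2) := by
        calc K ^ 4 ≤ (2 ^ K) ^ 4 := Nat.pow_le_pow_left Nat.lt_two_pow_self.le 4
          _ = 2 ^ (K * 4) := (pow_mul _ _ _).symm
          _ ≤ 2 ^ (K ^ 2) := Nat.pow_le_pow_right (by norm_num) (by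
              rw [sq]
              exact Nat.mul_le_mul_left K (by omega))
      exact_mod_cast h2
    have h3 : (4 * w) ^ 4 ≤ (K : ℝ) ^ 4 := by gcongr
    have h4 : (4 * w) ^ 4 = 256 / δ ^ 2 := by
      have : (4 * w) ^ 4 = 256 * (w * w) ^ 2 := by ring
      rw [this, hww]
      ring
    calc (8 : ℝ) = p / 4 * (256 / δ ^ 2) := by
          rw [hp]
          field_simp
          norm_num
      _ ≤ p / 4 * 2 ^ (K ^ 2) := by
          gcongr
          linarith
  set b : ℕ := ⌊36 / δ⌋₊ with hb
  have hb1 : (b : ℝ) ≤ 36 / δ := Nat.floor_le (by positivity)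
  have hb2 : 36 / δ < b + 1 := Nat.lt_floor_add_one _
  have hb3 : (1 : ℝ) ≤ b := by
    have : 18 ≤ 36 / δ := by
      rw [le_div_iff₀ hδ]
      linarith
    have h0 : 0 < b := Nat.floor_pos.2 (by linarith)
    exact_mod_cast h0
  have hsd : (d : ℝ) ≤ s := by nlinarith
  have main := log_card_le_of_separated (F := F.image fun f : ι → ℝ => f ∘ φ) (p := p / 4) (c := 1)
    (θ := δ / 18) (t := δ / 2) (D := d) (b := b) (K := K) (by positivity) (by omega) hKpow
    (by positivity) (by linarith)
    (by
      have : 2 * 1 / (δ / 18) = 36 / δ := by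
        field_simp
        norm_num
      rw [this]
      exact hb2)
    (by
      intro f hf i
      obtain ⟨g, hg, rfl⟩ := mem_image.1 hf
      exact hF g hg _)
    (by
      intro f hf g hg hfg
      obtain ⟨f', hf', rfl⟩ := mem_image.1 hf
      obtain ⟨g', hg', rfl⟩ := mem_image.1 hg
      rw [Fintype.card_fin]
      exact hφsep f' hf' g' hg' fun h => hfg (by rw [h]))
    (by linarith)
    (by
      rw [Fintype.card_fin]
      nlinarith)
    (by
      intro k x r hx
      have := hfat k (φ ∘ x) r fun β => by
        obtain ⟨f, hf, hf'⟩ := hx β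
        obtain ⟨g, hg, rfl⟩ := mem_image.1 hf
        refine ⟨g, hg, fun i => ?_⟩
        have := hf' i
        rwa [show δ / 18 / 2 = δ / 36 by ring] at this
      exact_mod_cast this)
  rw [card_image_of_injOn hinj, Fintype.card_fin, ← hM] at main
  exact le_of_le_mul_log hδ hd' hMd hs0 hs2 hb3 hb1 hw0 hww hw7 (by linarith) hK2 main

/-- If separated finite subsets of `T` have bounded cardinality then a maximal one is a net. -/
lemma exists_maximal_separated {α : Type*} (T : Set α) (sep : α → α → Prop)
    (hsymm : ∀ a b, sep a b → sep b a) (B : ℕ)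
    (hB : ∀ F : Finset α, (F : Set α) ⊆ T → (∀ f ∈ F, ∀ g ∈ F, f ≠ g → sep f g) → F.card ≤ B) :
    ∃ F : Finset α, (F : Set α) ⊆ T ∧ (∀ f ∈ F, ∀ g ∈ F, f ≠ g → sep f g) ∧
      ∀ t ∈ T, ∃ f ∈ F, t = f ∨ ¬ sep t f := by
  classical
  let P : ℕ → Prop := fun n => ∃ F : Finset α, (F : Set α) ⊆ T ∧
    (∀ f ∈ F, ∀ g ∈ F, f ≠ g → sep f g) ∧ F.card = n
  have h0 : P 0 := ⟨∅, by simp, by simp, by simp⟩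
  obtain ⟨F, hFT, hF, hc⟩ := Nat.findGreatest_spec (P := P) (Nat.zero_le B) h0
  refine ⟨F, hFT, hF, fun t ht => ?_⟩
  by_contra! h
  have htF : t ∉ F := fun htF => (h t htF).1 rfl
  have hT : ((insert t F : Finset α) : Set α) ⊆ T := by
    rw [coe_insert]
    exact Set.insert_subset ht hFT
  have hS : ∀ f ∈ insert t F, ∀ g ∈ insert t F, f ≠ g → sep f g := by
    intro f hf g hg hfg
    rcases mem_insert.1 hf with rfl | hf'
    · rcases mem_insert.1 hg with rfl | hg'
      · exact absurd rfl hfg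
      · exact (h g hg').2
    · rcases mem_insert.1 hg with rfl | hg'
      · exact hsymm _ _ (h f hf').2
      · exact hF f hf' g hg' hfg
  have hle := Nat.le_findGreatest (P := P) (hB _ hT hS) ⟨_, hT, hS, rfl⟩
  rw [card_insert_of_notMem htF] at hle
  omega

lemma exists_l2_net {T : Set (ι → ℝ)} {δ : ℝ} {d : ℕ} (hδ : 0 < δ) (hδ2 : δ ≤ 2) (hd : 1 ≤ d)
    (hT : ∀ f ∈ T, ∀ i, |f i| ≤ 1)
    (hfat : ∀ (k : ℕ) (x : Fin k → ι) (r : Fin k → ℝ), FatShatters T (δ / 36) x r → k ≤ d) :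
    ∃ N : Finset (ι → ℝ), (N : Set (ι → ℝ)) ⊆ T ∧ Real.log N.card ≤ 700 * d / δ ∧
      ∀ t ∈ T, ∃ f ∈ N, ∑ i, (t i - f i) ^ 2 ≤ δ ^ 2 * Fintype.card ι := by
  have hent : ∀ F : Finset (ι → ℝ), (F : Set (ι → ℝ)) ⊆ T →
      (∀ f ∈ F, ∀ g ∈ F, f ≠ g → δ ^ 2 * Fintype.card ι < ∑ i, (f i - g i) ^ 2) →
      Real.log F.card ≤ 700 * d / δ := fun F hFT hF =>
    log_card_le_of_l2_separated hδ hδ2 hd (fun f hf => hT f (hFT hf)) hF fun k x r hx =>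
      hfat k x r fun β => by
        obtain ⟨f, hf, hf'⟩ := hx β
        exact ⟨f, hFT hf, hf'⟩
  obtain ⟨N, hNT, hN, hnet⟩ := exists_maximal_separated T
    (fun f g => δ ^ 2 * Fintype.card ι < ∑ i, (f i - g i) ^ 2)
    (fun f g h => by simpa only [← neg_sub (f _) (g _), neg_sq] using h)
    ⌊Real.exp (700 * d / δ)⌋₊ (fun F hFT hF => by
      apply Nat.le_floor
      rcases Nat.eq_zero_or_pos F.card with h0 | h0
      · rw [h0, Nat.cast_zero]
        exact (Real.exp_pos _).le
      · rw [← Real.log_le_iff_le_exp (by exact_mod_cast h0)]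
        exact hent F hFT hF)
  refine ⟨N, hNT, hent N hNT hN, fun t ht => ?_⟩
  obtain ⟨f, hf, h⟩ := hnet t ht
  refine ⟨f, hf, ?_⟩
  rcases h with rfl | h
  · simp only [sub_self, ne_eq, OfNat.ofNat_ne_zero, not_false_eq_true, zero_pow, sum_const_zero]
    positivity
  · exact not_lt.1 h

/-- Pairing of a sign pattern with a vector. -/
def pair (β : ι → Bool) (v : ι → ℝ) : ℝ := ∑ i, bval (β i) * v i

lemma sum_exp_pair_le (v : ι → ℝ) (l : ℝ) :
    ∑ β : ι → Bool, Real.exp (l * pair β v) ≤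
      2 ^ Fintype.card ι * Real.exp (l ^ 2 * (∑ i, v i ^ 2) / 2) := by
  have h1 : ∀ β : ι → Bool, Real.exp (l * pair β v) = ∏ i, Real.exp (l * (bval (β i) * v i)) := by
    intro β
    rw [pair, mul_sum, Real.exp_sum]
  have h2 : ∏ i : ι, ∑ o : Bool, Real.exp (l * (bval o * v i)) =
      ∑ β : ι → Bool, ∏ i, Real.exp (l * (bval (β i) * v i)) :=
    Fintype.prod_sum fun (i : ι) (o : Bool) => Real.exp (l * (bval o * v i))
  rw [sum_congr rfl fun β _ => h1 β, ← h2]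
  have h3 : ∀ i : ι, ∑ o : Bool, Real.exp (l * (bval o * v i)) = 2 * Real.cosh (l * v i) := by
    intro i
    rw [Fintype.sum_bool, Real.cosh_eq]
    simp only [bval, if_true, Bool.false_eq_true, if_false]
    ring_nf
  rw [prod_congr rfl fun i _ => h3 i, prod_mul_distrib, prod_const, card_univ]
  gcongr
  calc ∏ i, Real.cosh (l * v i) ≤ ∏ i, Real.exp ((l * v i) ^ 2 / 2) :=
        prod_le_prod (fun i _ => (Real.cosh_pos _).le) fun i _ => Real.cosh_le_exp_half_sq _
    _ = _ := by
        rw [← Real.exp_sum, ← sum_div, mul_sum]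
        simp only [mul_pow]

/-- Massart's finite class lemma, for a selector `a` of vectors from a finite set. -/
lemma sum_pair_le {A : Finset (ι → ℝ)} (a : (ι → Bool) → ι → ℝ) (ha : ∀ β, a β ∈ A)
    {V L R : ℝ} (hV : ∀ v ∈ A, ∑ i, v i ^ 2 ≤ V) (hV0 : 0 < V) (hL : Real.log A.card ≤ L)
    (hR : 0 < R) (hVL : 2 * V * L ≤ R ^ 2) :
    ∑ β, pair β (a β) ≤ 2 ^ Fintype.card ι * R := by
  set l : ℝ := R / V with hl
  have hl0 : 0 < l := by positivity
  set c : ℝ := L + l ^ 2 * V / 2 with hc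
  have hA : (A.card : ℝ) ≤ Real.exp L := by
    have : 0 < A.card := card_pos.2 ⟨_, ha fun _ => true⟩
    rwa [← Real.log_le_iff_le_exp (by exact_mod_cast this)]
  have h1 : ∀ β, l * pair β (a β) ≤
      Real.exp (-c) * ∑ v ∈ A, Real.exp (l * pair β v) + (c - 1) := by
    intro β
    have h2 := Real.add_one_le_exp (l * pair β (a β) - c)
    have h3 : Real.exp (l * pair β (a β)) ≤ ∑ v ∈ A, Real.exp (l * pair β v) :=
      single_le_sum (f := fun v => Real.exp (l * pair β v)) (fun _ _ => (Real.exp_pos _).le) (ha β)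
    have h4 : Real.exp (l * pair β (a β) - c) =
        Real.exp (-c) * Real.exp (l * pair β (a β)) := by
      rw [← Real.exp_add]
      ring_nf
    have h5 : Real.exp (-c) * Real.exp (l * pair β (a β)) ≤
        Real.exp (-c) * ∑ v ∈ A, Real.exp (l * pair β v) := by gcongr
    linarith
  have h2 : ∑ β : ι → Bool, ∑ v ∈ A, Real.exp (l * pair β v) ≤
      Real.exp L * (2 ^ Fintype.card ι * Real.exp (l ^ 2 * V / 2)) := by
    rw [sum_comm]
    calc ∑ v ∈ A, ∑ β : ι → Bool, Real.exp (l * pair β v)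
        ≤ ∑ v ∈ A, 2 ^ Fintype.card ι * Real.exp (l ^ 2 * V / 2) := by
          refine sum_le_sum fun v hv => (sum_exp_pair_le v l).trans ?_
          gcongr
          exact hV v hv
      _ = A.card * (2 ^ Fintype.card ι * Real.exp (l ^ 2 * V / 2)) := by
          rw [sum_const, nsmul_eq_mul]
      _ ≤ _ := by gcongr
  have h3 : l * ∑ β, pair β (a β) ≤ 2 ^ Fintype.card ι * c := by
    have h4 := sum_le_sum fun β (_ : β ∈ (univ : Finset (ι → Bool))) => h1 β
    rw [← mul_sum, sum_add_distrib, ← mul_sum, sum_const, card_univ, Fintype.card_fun,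
      Fintype.card_bool, nsmul_eq_mul] at h4
    have h5 : Real.exp (-c) * ∑ β : ι → Bool, ∑ v ∈ A, Real.exp (l * pair β v) ≤
        2 ^ Fintype.card ι := by
      calc _ ≤ Real.exp (-c) * (Real.exp L * (2 ^ Fintype.card ι * Real.exp (l ^ 2 * V / 2))) := by
            gcongr
        _ = 2 ^ Fintype.card ι * (Real.exp (-c) * Real.exp (L + l ^ 2 * V / 2)) := by
            rw [Real.exp_add]
            ring
        _ = 2 ^ Fintype.card ι := by rw [← hc, ← Real.exp_add]; simp
    push_cast at h4
    linarith
  have h4 : c ≤ l * R := by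
    have e1 : l * R = R ^ 2 / V := by
      rw [hl]
      ring
    have e2 : l ^ 2 * V = R ^ 2 / V := by
      rw [hl]
      field_simp
    have e3 : 2 * L ≤ R ^ 2 / V := by
      rw [le_div_iff₀ hV0]
      linarith
    rw [hc, e1, e2]
    linarith
  have h5 : l * ∑ β, pair β (a β) ≤ l * (2 ^ Fintype.card ι * R) := by
    refine h3.trans ?_
    rw [mul_left_comm]
    gcongr
  exact le_of_mul_le_mul_left h5 hl0

lemma pair_sub {κ : Type*} [Fintype κ] (β : κ → Bool) (u v : κ → ℝ) : pair β (u - v) = pair β u - pair β v := by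
  simp only [pair, Pi.sub_apply, mul_sub, sum_sub_distrib]

lemma sum_pair_const (v : ι → ℝ) : ∑ β : ι → Bool, pair β v = 0 := by
  have h : ∑ β : ι → Bool, pair β v = ∑ β : ι → Bool, -pair β v := by
    refine Fintype.sum_equiv (Equiv.piCongrRight fun _ => Equiv.boolNot) _ _ fun β => ?_
    simp only [pair, ← sum_neg_distrib]
    refine sum_congr rfl fun i _ => ?_
    cases hb : β i <;> simp [bval, hb]
  rw [sum_neg_distrib] at h
  linarith

lemma pair_le_of_sum_sq_le {κ : Type*} [Fintype κ] {δ : ℝ} (hδ : 0 < δ) (β : κ → Bool)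
    (v : κ → ℝ) (hv : ∑ i, v i ^ 2 ≤ δ ^ 2 * Fintype.card κ) :
    pair β v ≤ δ * Fintype.card κ := by
  have h1 : δ * pair β v ≤ ∑ i, (v i ^ 2 / 2 + δ ^ 2 / 2) := by
    rw [pair, mul_sum]
    refine sum_le_sum fun i _ => ?_
    have : bval (β i) = 1 ∨ bval (β i) = -1 := by
      cases β i <;> simp [bval]
    rcases this with h | h <;> rw [h] <;> nlinarith [sq_nonneg (v i - δ), sq_nonneg (v i + δ)]
  rw [sum_add_distrib, ← sum_div, sum_const, card_univ, nsmul_eq_mul] at h1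
  have h2 : δ * pair β v ≤ δ * (δ * Fintype.card κ) := by nlinarith
  exact le_of_mul_le_mul_left h2 hδ

/-- Chaining bound for a class with bounded fat-shattering dimension, down to the scale
`2 * 4⁻ᴶ`. -/
lemma sum_pair_le_chain {T : Set (ι → ℝ)} [Nonempty ι] {d J : ℕ} (hd : 1 ≤ d)
    (hT : ∀ f ∈ T, ∀ i, |f i| ≤ 1)
    (hfat : ∀ j ≤ J, ∀ (k : ℕ) (x : Fin k → ι) (r : Fin k → ℝ),
      FatShatters T (2 * (1 / 4) ^ j / 36) x r → k ≤ d)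
    (h : (ι → Bool) → ι → ℝ) (hh : ∀ β, h β ∈ T) :
    ∑ β, pair β (h β) ≤ 2 ^ Fintype.card ι *
      (15 * √(700 * d * Fintype.card ι) + 2 * (1 / 4) ^ J * Fintype.card ι) := by
  have hn : (0 : ℝ) < Fintype.card ι := by exact_mod_cast Fintype.card_pos
  have hd' : (1 : ℝ) ≤ d := by exact_mod_cast hd
  have hnet : ∀ j : ℕ, ∃ N : Finset (ι → ℝ), j ≤ J → (N : Set (ι → ℝ)) ⊆ T ∧
      Real.log N.card ≤ 700 * d / (2 * (1 / 4) ^ j) ∧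
      ∀ t ∈ T, ∃ f ∈ N, ∑ i, (t i - f i) ^ 2 ≤ (2 * (1 / 4) ^ j) ^ 2 * Fintype.card ι := by
    intro j
    by_cases hj : j ≤ J
    · obtain ⟨N, hN⟩ := exists_l2_net (δ := 2 * (1 / 4) ^ j) (by positivity)
        (by
          have : ((1 : ℝ) / 4) ^ j ≤ 1 := pow_le_one₀ (by norm_num) (by norm_num)
          linarith) hd hT (hfat j hj)
      exact ⟨N, fun _ => hN⟩
    · exact ⟨∅, fun h => absurd h hj⟩
  choose N hN using hnet
  have hproj : ∀ (j : ℕ) (β : ι → Bool), ∃ f : ι → ℝ, j ≤ J → f ∈ N j ∧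
      ∑ i, (h β i - f i) ^ 2 ≤ (2 * (1 / 4) ^ j) ^ 2 * Fintype.card ι := by
    intro j β
    by_cases hj : j ≤ J
    · obtain ⟨f, hf⟩ := (hN j hj).2.2 (h β) (hh β)
      exact ⟨f, fun _ => hf⟩
    · exact ⟨0, fun h => absurd h hj⟩
  choose prj hprj using hproj
  set S : ℝ := √(700 * d * Fintype.card ι) with hS
  have hS0 : 0 < S := Real.sqrt_pos.2 (by positivity)
  have hS2 : S ^ 2 = 700 * d * Fintype.card ι := Real.sq_sqrt (by positivity)
  have hchain : ∀ j ≤ J, ∑ β, pair β (prj j β) ≤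
      2 ^ Fintype.card ι * (S * (15 - 14 * (1 / 2) ^ j)) := by
    intro j
    induction j with
    | zero =>
      intro hj
      have := sum_pair_le (A := N 0) (fun β => prj 0 β) (fun β => (hprj 0 β hj).1)
        (V := Fintype.card ι) (L := 350 * d) (R := S)
        (fun v hv => by
          calc ∑ i, v i ^ 2 ≤ ∑ _i : ι, (1 : ℝ) := sum_le_sum fun i _ => by
                rw [← sq_abs]
                exact pow_le_one₀ (abs_nonneg _) (hT v ((hN 0 hj).1 hv) i)
            _ = _ := by simp)
        hn
        (by
          have := (hN 0 hj).2.1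
          rw [pow_zero, mul_one] at this
          linarith) hS0
        (by
          rw [hS2]
          linarith)
      refine this.trans (le_of_eq ?_)
      norm_num
    | succ j ih =>
      intro hj
      have hj' : j ≤ J := by omega
      have ih := ih hj'
      set u : ℝ := (1 / 4) ^ j with hu
      have hu0 : 0 < u := by positivity
      set V : ℝ := 17 / 2 * u ^ 2 * Fintype.card ι with hVdef
      set A := (((N (j + 1)) ×ˢ (N j)).image fun q => q.1 - q.2).filter
        fun v => ∑ i, v i ^ 2 ≤ V with hA
      have hmem : ∀ β, prj (j + 1) β - prj j β ∈ A := by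
        intro β
        obtain ⟨a1, a2⟩ := hprj (j + 1) β hj
        obtain ⟨b1, b2⟩ := hprj j β hj'
        refine mem_filter.2 ⟨mem_image.2 ⟨(_, _), mem_product.2 ⟨a1, b1⟩, rfl⟩, ?_⟩
        calc ∑ i, (prj (j + 1) β - prj j β) i ^ 2
            ≤ ∑ i, (2 * (h β i - prj (j + 1) β i) ^ 2 + 2 * (h β i - prj j β i) ^ 2) := by
              refine sum_le_sum fun i _ => ?_
              rw [Pi.sub_apply]
              nlinarith [sq_nonneg ((h β i - prj (j + 1) β i) + (h β i - prj j β i))]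
          _ ≤ V := by
              rw [sum_add_distrib, ← mul_sum, ← mul_sum, hVdef]
              rw [pow_succ (1 / 4 : ℝ) j, ← hu] at a2
              rw [← hu] at b2
              nlinarith
      have hAcard : Real.log A.card ≤ 700 * d * (5 / (2 * u)) := by
        have hpos : (0 : ℝ) < A.card := by
          have : 0 < A.card := card_pos.2 ⟨_, hmem fun _ => true⟩
          exact_mod_cast this
        have hN1 : (0 : ℝ) < (N (j + 1)).card := by
          have : 0 < (N (j + 1)).card := card_pos.2 ⟨_, (hprj (j + 1) (fun _ => true) hj).1⟩
          exact_mod_cast this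
        have hN0 : (0 : ℝ) < (N j).card := by
          have : 0 < (N j).card := card_pos.2 ⟨_, (hprj j (fun _ => true) hj').1⟩
          exact_mod_cast this
        have h1 : (A.card : ℝ) ≤ (N (j + 1)).card * (N j).card := by
          have : A.card ≤ ((N (j + 1)) ×ˢ (N j)).card := by
            rw [hA]
            exact (card_filter_le _ _).trans card_image_le
          rw [card_product] at this
          exact_mod_cast this
        have h2 := Real.log_le_log hpos h1
        rw [Real.log_mul hN1.ne' hN0.ne'] at h2
        have h3 := (hN (j + 1) hj).2.1
        have h4 := (hN j hj').2.1
        rw [pow_succ (1 / 4 : ℝ) j, ← hu] at h3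
        rw [← hu] at h4
        have h5 : 700 * d * (5 / (2 * u)) = 700 * d / (2 * (u * (1 / 4))) + 700 * d / (2 * u) := by
          field_simp
          norm_num
        linarith
      have hhalf : ((1 : ℝ) / 2) ^ j * (1 / 2) ^ j = u := by
        rw [← mul_pow, hu]
        norm_num
      have hstep := sum_pair_le (A := A) (fun β => prj (j + 1) β - prj j β) hmem (V := V)
        (R := 7 * (1 / 2) ^ j * S) (fun v hv => (mem_filter.1 hv).2) (by positivity) hAcard
        (by positivity)
        (by
          have e1 : (7 * (1 / 2) ^ j * S) ^ 2 =
              49 * (((1 : ℝ) / 2) ^ j * (1 / 2) ^ j) * S ^ 2 := by ring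
          rw [e1, hhalf, hS2, hVdef]
          have e2 : 2 * (17 / 2 * u ^ 2 * (Fintype.card ι : ℝ)) * (700 * d * (5 / (2 * u))) =
              85 / 2 * u * (700 * d * Fintype.card ι) := by
            field_simp
            norm_num
          rw [e2]
          gcongr
          norm_num)
      simp only [pair_sub, sum_sub_distrib] at hstep
      rw [pow_succ]
      have e3 : (2 : ℝ) ^ Fintype.card ι * (S * (15 - 14 * ((1 / 2) ^ j * (1 / 2)))) =
          2 ^ Fintype.card ι * (S * (15 - 14 * (1 / 2) ^ j)) +
            2 ^ Fintype.card ι * (7 * (1 / 2) ^ j * S) := by ring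
      linarith
  have h1 := hchain J le_rfl
  have h2 : ∑ β, pair β (h β - prj J β) ≤
      2 ^ Fintype.card ι * (2 * (1 / 4) ^ J * Fintype.card ι) := by
    calc _ ≤ ∑ _β : ι → Bool, 2 * (1 / 4) ^ J * (Fintype.card ι : ℝ) :=
          sum_le_sum fun β _ => pair_le_of_sum_sq_le (by positivity) _ _
            (by simpa using (hprj J β le_rfl).2)
      _ = _ := by simp
  simp only [pair_sub, sum_sub_distrib] at h2
  have h3 : (2 : ℝ) ^ Fintype.card ι * (S * (15 - 14 * (1 / 2) ^ J)) ≤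
      2 ^ Fintype.card ι * (15 * S) := by
    have : (0 : ℝ) ≤ (1 / 2) ^ J := by positivity
    exact mul_le_mul_of_nonneg_left (by nlinarith) (by positivity)
  rw [mul_add]
  linarith

lemma FatShatters.anti {X : Type*} {H : Set (X → ℝ)} {α α' : ℝ} (hα : α' ≤ α) {k : ℕ}
    {x : Fin k → X} {r : Fin k → ℝ} (h : FatShatters H α x r) : FatShatters H α' x r :=
  fun β => by
    obtain ⟨f, hf, hf'⟩ := h β
    exact ⟨f, hf, fun i => ⟨fun hi => by linarith [(hf' i).1 hi],
      fun hi => by linarith [(hf' i).2 hi]⟩⟩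

/-- The fat-shattering dimension of a convex hull is at most of order `fat / α ^ 2`. -/
lemma fat_convexHull_le {X : Type*} {H : Set (X → ℝ)} {α : ℝ} {d n : ℕ} (hα : 0 < α)
    (hα1 : α ≤ 1) (hd : 1 ≤ d) (hH : ∀ h ∈ H, ∀ x, |h x| ≤ 1)
    (hfat : ∀ (k : ℕ) (x : Fin k → X) (r : Fin k → ℝ), FatShatters H (α / 288) x r → k ≤ d)
    (x : Fin n → X) (r : Fin n → ℝ) (hx : FatShatters (convexHull ℝ H) α x r) :
    (n : ℝ) ≤ 630000 * d / α ^ 2 := by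
  rcases Nat.eq_zero_or_pos n with rfl | hn
  · rw [Nat.cast_zero]
    positivity
  have : Nonempty (Fin n) := ⟨⟨0, hn⟩⟩
  have hn' : (0 : ℝ) < n := by exact_mod_cast hn
  have hsel : ∀ β : Fin n → Bool, ∃ h ∈ H, n * α + pair β r ≤ pair β (h ∘ x) := by
    intro β
    obtain ⟨f, hf, hf'⟩ := hx β
    let lin : (X → ℝ) →ₗ[ℝ] ℝ := ∑ i, bval (β i) • LinearMap.proj (x i)
    have hlin : ∀ g : X → ℝ, lin g = pair β (g ∘ x) := by
      intro g
      simp [lin, pair]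
    have h1 : n * α + pair β r ≤ lin f := by
      rw [hlin]
      have : n * α + pair β r = ∑ i, (α + bval (β i) * r i) := by
        simp [sum_add_distrib, pair]
      rw [this]
      refine sum_le_sum fun i _ => ?_
      rcases hb : β i with _ | _
      · have := (hf' i).2 hb
        simp only [bval, Bool.false_eq_true, if_false, Function.comp]
        linarith
      · have := (hf' i).1 hb
        simp only [bval, if_true, Function.comp]
        linarith
    obtain ⟨h, hh, hle⟩ := (lin.convexOn convex_univ).exists_ge_of_mem_convexHull
      (Set.subset_univ H) hf
    exact ⟨h, hh, by rw [← hlin]; exact h1.trans hle⟩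
  choose h hh hle using hsel
  have hJex : ∃ J : ℕ, 2 * (1 / 4 : ℝ) ^ J ≤ α / 2 := by
    obtain ⟨J, hJ⟩ := exists_pow_lt_of_lt_one (show 0 < α / 4 by positivity)
      (show (1 / 4 : ℝ) < 1 by norm_num)
    exact ⟨J, by linarith⟩
  classical
  set J := Nat.find hJex with hJdef
  have hJ : 2 * (1 / 4 : ℝ) ^ J ≤ α / 2 := Nat.find_spec hJex
  have hJmin : ∀ j ≤ J, α / 8 ≤ 2 * (1 / 4 : ℝ) ^ j := by
    intro j hj
    rcases j with _ | j
    · rw [pow_zero]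
      linarith
    · have := Nat.find_min hJex (show j < J by omega)
      rw [pow_succ]
      linarith [not_le.1 this]
  have hup := sum_pair_le_chain (T := (fun g : X → ℝ => g ∘ x) '' H) (J := J) hd
    (by
      rintro _ ⟨g, hg, rfl⟩ i
      exact hH g hg _)
    (by
      intro j hj k z ρ hz
      refine hfat k (x ∘ z) ρ fun β => ?_
      obtain ⟨_, ⟨g, hg, rfl⟩, hg'⟩ :=
        FatShatters.anti (α' := α / 288) (by linarith [hJmin j hj]) hz β
      exact ⟨g, hg, hg'⟩)
    (fun β => h β ∘ x) (fun β => ⟨h β, hh β, rfl⟩)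
  have hlow : ∑ _β : Fin n → Bool, n * α ≤ ∑ β, pair β (h β ∘ x) := by
    have := sum_le_sum fun β (_ : β ∈ (univ : Finset (Fin n → Bool))) => hle β
    rwa [sum_add_distrib, sum_pair_const, add_zero] at this
  rw [sum_const, card_univ, Fintype.card_fun, Fintype.card_bool, nsmul_eq_mul] at hlow
  push_cast at hlow
  have h1 := le_of_mul_le_mul_left (hlow.trans hup) (by positivity)
  rw [Fintype.card_fin] at h1
  set S : ℝ := √(700 * d * n) with hS
  have hS2 : S ^ 2 = 700 * d * n := Real.sq_sqrt (by positivity)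
  have h2 : n * α ≤ 30 * S := by nlinarith
  have h3 : (n * α) ^ 2 ≤ (30 * S) ^ 2 := by gcongr
  rw [mul_pow, mul_pow, hS2] at h3
  rw [le_div_iff₀ (by positivity)]
  have h4 : (n : ℝ) * (n * α ^ 2) ≤ n * (630000 * d) := by nlinarith
  exact le_of_mul_le_mul_left h4 hn'

lemma FatShatters.of_truncAt {X : Type*} {G : Set (X → ℝ)} {τ α : ℝ} (hτ : 0 ≤ τ) (hα : 0 < α)
    {k : ℕ} {x : Fin k → X} {r : Fin k → ℝ} (h : FatShatters (truncAt τ '' G) α x r) :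
    FatShatters G α x r := by
  obtain ⟨_, ⟨u, -, rfl⟩, hu⟩ := h fun _ => true
  obtain ⟨_, ⟨l, -, rfl⟩, hl⟩ := h fun _ => false
  intro β
  obtain ⟨_, ⟨f, hf, rfl⟩, hf'⟩ := h β
  refine ⟨f, hf, fun i => ⟨fun hi => ?_, fun hi => ?_⟩⟩
  · have h1 := (hf' i).1 hi
    have h2 : -τ ≤ r i - α := (le_max_left _ _).trans ((hl i).2 rfl)
    rcases le_max_iff.1 h1 with h3 | h3
    · linarith
    · exact h3.trans (min_le_right _ _)
  · have h1 := (hf' i).2 hi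
    have h2 : r i + α ≤ τ := ((hu i).1 rfl).trans (max_le (by linarith) (min_le_left _ _))
    rcases min_le_iff.1 ((le_max_right _ _).trans h1) with h3 | h3
    · linarith
    · exact h3

lemma abs_truncAt_le {X : Type*} {τ : ℝ} (hτ : 0 ≤ τ) (f : X → ℝ) (x : X) :
    |truncAt τ f x| ≤ τ :=
  abs_le.2 ⟨le_max_left _ _, max_le (by linarith) (min_le_left _ _)⟩

lemma abs_truncAt_sub_le {X : Type*} (τ : ℝ) (f g : X → ℝ) (x : X) :
    |truncAt τ f x - truncAt τ g x| ≤ |f x - g x| :=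
  calc |truncAt τ f x - truncAt τ g x| ≤ max |-τ - -τ| |min τ (f x) - min τ (g x)| :=
        abs_max_sub_max_le_max _ _ _ _
    _ ≤ |f x - g x| := max_le (by simp) ((abs_min_sub_min_le_max _ _ _ _).trans (by simp))

/-- Sup-norm cover of a bounded class whose fat-shattering dimension is at most `D`. -/
lemma exists_sup_cover {T : Set (ι → ℝ)} {c θ D : ℝ} {b K : ℕ} (hθ : 0 < θ) (hb1 : 1 ≤ b)
    (hb : 2 * c / θ < b + 1) (hK1 : 1 ≤ K) (hK : 8 ≤ D / Fintype.card ι * 2 ^ K ^ 2)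
    (hT : ∀ f ∈ T, ∀ i, |f i| ≤ c) (hD : 0 < D) (hDn : D ≤ Fintype.card ι)
    (hfat : ∀ (k : ℕ) (x : Fin k → ι) (r : Fin k → ℝ), FatShatters T (θ / 2) x r → (k : ℝ) ≤ D) :
    ∃ V : Finset (ι → ℝ), (∀ f ∈ T, ∃ v ∈ V, ∀ i, |f i - v i| ≤ 9 * θ) ∧
      Real.log V.card ≤
        (K + 1) * (D * Real.log (Real.exp 1 * Fintype.card ι * (b + 1 : ℕ) / D)) := by
  classical
  set n : ℝ := (Fintype.card ι : ℝ) with hn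
  have hn0 : 0 < n := hD.trans_le hDn
  have hb1' : (1 : ℝ) ≤ b := by exact_mod_cast hb1
  have hDb : D ≤ n * b := hDn.trans (le_mul_of_one_le_right hn0.le hb1')
  set L : ℝ := D * Real.log (Real.exp 1 * n * b / D) with hL
  set L' : ℝ := D * Real.log (Real.exp 1 * n * (b + 1 : ℕ) / D) with hL'
  have hLL' : L ≤ L' := by
    rw [hL, hL']
    gcongr
    omega
  let sep : (ι → ℝ) → (ι → ℝ) → Prop :=
    fun f g => D ≤ (univ.filter fun i => 9 * θ ≤ |f i - g i|).card
  have hpack : ∀ F : Finset (ι → ℝ), ↑F ⊆ T → (∀ f ∈ F, ∀ g ∈ F, f ≠ g → sep f g) →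
      Real.log F.card ≤ K * L := by
    intro F hFT hF
    refine log_card_le_of_separated (p := D / n) (t := 9 * θ) (by positivity) hK1 hK hθ le_rfl hb
      (fun f hf => hT f (hFT hf)) ?_ hD hDb ?_
    · intro f hf g hg hfg
      rw [div_mul_cancel₀ _ hn0.ne']
      exact hF f hf g hg hfg
    · intro k x r hx
      refine hfat k x r fun β => ?_
      obtain ⟨f, hf, hf'⟩ := hx β
      exact ⟨f, hFT hf, hf'⟩
  obtain ⟨F, hFT, hFsep, hFmax⟩ := exists_maximal_separated T sep
    (fun f g h => by simpa only [sep, abs_sub_comm] using h) ⌊Real.exp (K * L)⌋₊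
    (fun F hFT hF => by
      refine Nat.le_floor ?_
      rcases Nat.eq_zero_or_pos F.card with h0 | h0
      · rw [h0, Nat.cast_zero]
        positivity
      · exact (Real.log_le_iff_le_exp (by exact_mod_cast h0)).1 (hpack F hFT hF))
  set S : Finset (ι → Option (Fin (b + 1))) :=
    univ.filter fun s => ((supp s).card : ℝ) ≤ D with hS
  have hScard : (S.card : ℝ) ≤ Real.exp L' :=
    card_patterns_le hD (hDb.trans (by gcongr; omega)) S fun s hs => (mem_filter.1 hs).2
  let patch : (ι → ℝ) × (ι → Option (Fin (b + 1))) → ι → ℝ :=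
    fun q i => (q.2 i).elim (q.1 i) fun l => -c + l * θ
  refine ⟨(F ×ˢ S).image patch, fun f hf => ?_, ?_⟩
  · obtain ⟨g, hg, hfg⟩ := hFmax f hf
    have hfar : ((univ.filter fun i => 9 * θ ≤ |f i - g i|).card : ℝ) ≤ D := by
      rcases hfg with rfl | hfg
      · rw [filter_false_of_mem, card_empty, Nat.cast_zero]
        · exact hD.le
        · intro i _
          rw [sub_self, abs_zero]
          linarith
      · exact (not_le.1 hfg).le
    have hlev : ∀ i, ⌊(f i + c) / θ⌋₊ < b + 1 := by
      intro i
      have h1 := abs_le.1 (hT f hf i)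
      rw [Nat.floor_lt (div_nonneg (by linarith) hθ.le)]
      push_cast
      refine lt_of_le_of_lt ?_ hb
      gcongr
      linarith
    let s : ι → Option (Fin (b + 1)) :=
      fun i => if 9 * θ ≤ |f i - g i| then some ⟨_, hlev i⟩ else none
    have hs : s ∈ S := by
      refine mem_filter.2 ⟨mem_univ _, ?_⟩
      have : supp s = univ.filter fun i => 9 * θ ≤ |f i - g i| := by
        ext i
        simp [supp, s]
      rwa [this]
    refine ⟨_, mem_image_of_mem patch (mk_mem_product hg hs), fun i => ?_⟩
    by_cases hi : 9 * θ ≤ |f i - g i|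
    · have h1 : patch (g, s) i = -c + (⌊(f i + c) / θ⌋₊ : ℝ) * θ := by
        simp [patch, s, hi]
      have h2 := abs_le.1 (hT f hf i)
      have h3 := Nat.floor_le (show 0 ≤ (f i + c) / θ from div_nonneg (by linarith) hθ.le)
      have h4 := Nat.lt_floor_add_one ((f i + c) / θ)
      rw [le_div_iff₀ hθ] at h3
      rw [div_lt_iff₀ hθ] at h4
      rw [h1, abs_le]
      constructor <;> linarith
    · have h1 : patch (g, s) i = g i := by
        simp [patch, s, hi]
      rw [h1]
      exact (not_le.1 hi).le
  · have hS0 : (0 : ℝ) < S.card := by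
      have : 0 < S.card := card_pos.2 ⟨fun _ => none, mem_filter.2 ⟨mem_univ _, by
        simpa [supp] using hD.le⟩⟩
      exact_mod_cast this
    have hlogS : Real.log S.card ≤ L' := (Real.log_le_iff_le_exp hS0).2 hScard
    have hL'0 : 0 ≤ L' := (Real.log_natCast_nonneg _).trans hlogS
    rcases Nat.eq_zero_or_pos ((F ×ˢ S).image patch).card with h0 | h0
    · rw [h0, Nat.cast_zero, Real.log_zero]
      positivity
    have h1 : (((F ×ˢ S).image patch).card : ℝ) ≤ F.card * S.card := by
      have := card_image_le (s := F ×ˢ S) (f := patch)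
      rw [card_product] at this
      exact_mod_cast this
    have h0' : (0 : ℝ) < ((F ×ˢ S).image patch).card := by exact_mod_cast h0
    have hF0 : (F.card : ℝ) ≠ 0 := by
      intro h
      rw [h, zero_mul] at h1
      linarith
    have h2 := Real.log_le_log h0' h1
    rw [Real.log_mul hF0 hS0.ne'] at h2
    have h3 := hpack F hFT hFsep
    have h4 : K * L ≤ K * L' := by gcongr
    linarith

/-- A cover by arbitrary vectors of values yields a cover by functions at twice the radius. -/
lemma exists_isCover_of_values {X : Type*} {m : ℕ} {x : Fin m → X} {G : Set (X → ℝ)} {δ : ℝ}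
    (V : Finset (Fin m → ℝ)) (hV : ∀ g ∈ G, ∃ v ∈ V, ∀ i, |g (x i) - v i| ≤ δ) :
    ∃ N : Finset (X → ℝ), IsCover x G (2 * δ) ↑N ∧ Real.log N.card ≤ Real.log V.card := by
  classical
  let near : (Fin m → ℝ) → (X → ℝ) → Prop := fun v g => g ∈ G ∧ ∀ i, |g (x i) - v i| ≤ δ
  let rep : (Fin m → ℝ) → X → ℝ := fun v => if h : ∃ g, near v g then h.choose else 0
  refine ⟨V.image rep, fun g hg => ?_, ?_⟩
  · obtain ⟨v, hv, hgv⟩ := hV g hg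
    have hex : ∃ g, near v g := ⟨g, hg, hgv⟩
    have hrep : near v (rep v) := by
      simp only [rep, dif_pos hex]
      exact hex.choose_spec
    refine ⟨rep v, mem_coe.2 (mem_image_of_mem rep hv), fun i => ?_⟩
    have h1 := abs_le.1 (hgv i)
    have h2 := abs_le.1 (hrep.2 i)
    rw [abs_le]
    constructor <;> linarith
  · rcases Nat.eq_zero_or_pos (V.image rep).card with h0 | h0
    · rw [h0, Nat.cast_zero, Real.log_zero]
      exact Real.log_natCast_nonneg _
    · exact Real.log_le_log (by exact_mod_cast h0) (by exact_mod_cast card_image_le)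

/-- If no point is fat-shattered, the truncated convex hull is covered by a single function. -/
lemma exists_isCover_singleton {X : Type*} {H : Set (X → ℝ)} {α τ δ : ℝ} {m : ℕ}
    (x : Fin m → X) (hαδ : 2 * α ≤ δ) (hH : IsFatDim H α 0) :
    ∃ g : X → ℝ, IsCover x (truncAt τ '' convexHull ℝ H) δ {g} := by
  obtain ⟨⟨z, r, hzr⟩, hmax⟩ := hH
  obtain ⟨h₀, hh₀, -⟩ := hzr fun _ => true
  have hclose : ∀ h ∈ H, ∀ h' ∈ H, ∀ y, h y - h' y ≤ δ := by
    intro h hh h' hh' y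
    by_contra! hlt
    have : (1 : ℕ) ≤ 0 := hmax ⟨fun _ => y, fun _ => (h y + h' y) / 2, fun β => by
      rcases hb : β 0 with _ | _
      · refine ⟨h', hh', fun i => ?_⟩
        rw [Subsingleton.elim i 0, hb]
        exact ⟨fun h => by simp at h, fun _ => by linarith⟩
      · refine ⟨h, hh, fun i => ?_⟩
        rw [Subsingleton.elim i 0, hb]
        exact ⟨fun _ => by linarith, fun h => by simp at h⟩⟩
    omega
  refine ⟨truncAt τ h₀, ?_⟩
  rintro _ ⟨f, hf, rfl⟩
  refine ⟨_, rfl, fun i => (abs_truncAt_sub_le _ _ _ _).trans ?_⟩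
  have hup := ((LinearMap.proj (R := ℝ) (φ := fun _ : X => ℝ) (x i)).convexOn
    convex_univ).exists_ge_of_mem_convexHull (Set.subset_univ H) hf
  have hlo := ((LinearMap.proj (R := ℝ) (φ := fun _ : X => ℝ) (x i)).concaveOn
    convex_univ).exists_le_of_mem_convexHull (Set.subset_univ H) hf
  obtain ⟨u, hu, hu'⟩ := hup
  obtain ⟨l, hl, hl'⟩ := hlo
  simp only [LinearMap.proj_apply] at hu' hl'
  rw [abs_le]
  constructor
  · linarith [hclose _ hh₀ _ hl (x i)]
  · linarith [hclose _ hu _ hh₀ (x i)]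

/-- Numerical comparison behind the final logarithmic bound. -/
lemma exists_chain_length {q ρ : ℝ} {b : ℕ} (hq : 1 ≤ q) (hρ : 1 ≤ ρ) (hb : (b : ℝ) ≤ 144 * ρ) :
    ∃ K : ℕ, 1 ≤ K ∧ 8 * q ≤ 2 ^ K ^ 2 ∧
      (K + 1) * Real.log (Real.exp 1 * q * (b + 1 : ℕ)) ≤
        16 * Real.log (q * (8 * ρ)) ^ ((3 : ℝ) / 2) := by
  set L := Real.log (q * (8 * ρ)) with hL
  have h2lo := Real.log_two_gt_d9
  have h2hi := Real.log_two_lt_d9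
  have h8 : Real.log 8 = 3 * Real.log 2 := by
    rw [show (8 : ℝ) = 2 ^ 3 by norm_num, Real.log_pow]
    norm_num
  have hqL : Real.log (8 * q) ≤ L := Real.log_le_log (by positivity) (by nlinarith)
  have h8q : Real.log 8 ≤ Real.log (8 * q) := Real.log_le_log (by norm_num) (by linarith)
  have hL2 : 2 ≤ L := by linarith
  have hL0 : 0 < L := by linarith
  set R := √L with hR
  have hRsq : R ^ 2 = L := Real.sq_sqrt hL0.le
  have hR1 : 7 / 5 ≤ R := Real.le_sqrt_of_sq_le (by linarith)
  have hKlo := Nat.le_ceil (5 / 4 * R)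
  have hKhi := Nat.ceil_lt_add_one (show 0 ≤ 5 / 4 * R by linarith)
  set K := ⌈5 / 4 * R⌉₊
  refine ⟨K, ?_, ?_, ?_⟩
  · have : (0 : ℝ) < K := by linarith
    exact_mod_cast this
  · rw [← Real.log_le_log_iff (by positivity) (by positivity), Real.log_pow]
    have : 25 / 16 * L ≤ (K : ℝ) ^ 2 := by nlinarith
    push_cast
    nlinarith
  · have e1 : L ^ ((3 : ℝ) / 2) = R * L := by
      rw [show (3 : ℝ) / 2 = 1 / 2 + 1 by norm_num, Real.rpow_add hL0, Real.rpow_one,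
        ← Real.sqrt_eq_rpow]
    have hlog : Real.log (Real.exp 1 * q * (b + 1 : ℕ)) ≤ 4 * L := by
      have h1 : Real.exp 1 * q * (b + 1 : ℕ) ≤ 2 ^ 6 * (q * (8 * ρ)) := by
        have := Real.exp_one_lt_d9
        push_cast
        have h3 : Real.exp 1 * (b + 1) ≤ 2.7182818286 * (145 * ρ) := by
          gcongr
          linarith
        nlinarith
      have h2 := Real.log_le_log (by positivity) h1
      rw [Real.log_mul (x := 2 ^ 6) (by positivity) (by positivity), Real.log_pow,
        Nat.cast_ofNat] at h2
      linarith
    rw [e1]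
    calc (K + 1) * Real.log (Real.exp 1 * q * (b + 1 : ℕ)) ≤ (K + 1) * (4 * L) := by gcongr
      _ ≤ (4 * R) * (4 * L) := by
        gcongr
        linarith
      _ = _ := by ring

end FatCover

/-- covering-number bound for the truncated convex hull.
There are universal constants `C ≥ 1`, `Chat ≥ 1`, `chat > 0` such that for margins
`0 ≤ γ < γ' ≤ 1`, any `H ⊆ [−1,1]^X` and any tuple `x' ∈ X^m` with
`m ≥ Chat·fat_{chat(γ'−γ)}(H)/(γ'−γ)²`, the minimal `(γ'−γ)/2`-cover (in sup norm on `x'`)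
of `Conv(H)_{⌈2γ'⌉}` has log-size at most
`C·Chat·d/(γ'−γ)²·ln^{3/2}((γ'−γ)²m/(Chat·d)·8γ'/(γ'−γ))`, i.e. there exists such a cover
of that size. -/
theorem statement6 :
    ∃ C Chat chat : ℝ, 1 ≤ C ∧ 1 ≤ Chat ∧ 0 < chat ∧
    ∀ (X : Type) (γ γ' : ℝ) (H : Set (X → ℝ)) (m : ℕ) (x' : Fin m → X),
      0 ≤ γ → γ < γ' → γ' ≤ 1 → (∀ h ∈ H, ∀ x, |h x| ≤ 1) →
      ∀ d : ℕ, IsFatDim H (chat * (γ' - γ)) d →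
      Chat * d / (γ' - γ) ^ 2 ≤ m →
      ∃ N : Finset (X → ℝ),
        IsCover x' (truncAt (2 * γ') '' (convexHull ℝ H)) ((γ' - γ) / 2) ↑N ∧
        Real.log N.card ≤
          C * Chat * d / (γ' - γ) ^ 2 *
            Real.log ((γ' - γ) ^ 2 * m / (Chat * d) * (8 * γ' / (γ' - γ))) ^ ((3 : ℝ) / 2) := by
  refine ⟨16, 630000 * 72 ^ 2, 1 / (288 * 72), by norm_num, by norm_num, by norm_num, ?_⟩
  intro X γ γ' H m x' hγ hγγ' hγ' hH d hfat hm
  set ε := γ' - γ with hε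
  have hε0 : 0 < ε := sub_pos.2 hγγ'
  have hγ'0 : 0 < γ' := hγ.trans_lt hγγ'
  rcases Nat.eq_zero_or_pos d with rfl | hd
  · obtain ⟨g, hg⟩ := FatCover.exists_isCover_singleton (τ := 2 * γ') (δ := ε / 2) x'
      (by linarith) hfat
    exact ⟨{g}, by rwa [Finset.coe_singleton], by simp⟩
  have hd' : (1 : ℝ) ≤ d := by exact_mod_cast hd
  set D : ℝ := 630000 * 72 ^ 2 * d / ε ^ 2 with hD
  have hD0 : 0 < D := by positivity
  have hm0 : (0 : ℝ) < m := hD0.trans_le hm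
  set ρ : ℝ := γ' / ε with hρ
  have hρ1 : 1 ≤ ρ := (one_le_div hε0).2 (by linarith)
  have hb := Nat.floor_le (show 0 ≤ 144 * ρ by positivity)
  have hb' := Nat.lt_floor_add_one (144 * ρ)
  set b := ⌊144 * ρ⌋₊ with hbdef
  have hb1 : 1 ≤ b := Nat.le_floor (by push_cast; linarith)
  obtain ⟨K, hK1, hK, hlog⟩ := FatCover.exists_chain_length ((one_le_div hD0).2 hm) hρ1 hb
  obtain ⟨V, hV, hVcard⟩ := FatCover.exists_sup_cover
    (T := (fun g i => g (x' i)) '' (truncAt (2 * γ') '' convexHull ℝ H))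
    (c := 2 * γ') (θ := ε / 36) (D := D) (b := b) (K := K) (by positivity) hb1
    (by
      have : 2 * (2 * γ') / (ε / 36) = 144 * ρ := by
        rw [hρ]
        field_simp
        norm_num
      rwa [this])
    hK1
    (by
      rw [Fintype.card_fin, div_mul_eq_mul_div, le_div_iff₀ hm0]
      rwa [← mul_div_assoc, div_le_iff₀ hD0, mul_comm (2 ^ K ^ 2)] at hK)
    (by
      rintro _ ⟨_, ⟨f, -, rfl⟩, rfl⟩ i
      exact FatCover.abs_truncAt_le (by positivity) f _)
    hD0 (by rwa [Fintype.card_fin])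
    (by
      intro k z r hz
      have hconv : FatShatters (convexHull ℝ H) (ε / 72) (x' ∘ z) r := by
        refine FatCover.FatShatters.of_truncAt (τ := 2 * γ') (by positivity) (by positivity) ?_
        intro β
        obtain ⟨_, ⟨g, hg, rfl⟩, hg'⟩ := hz β
        refine ⟨g, hg, fun i => ?_⟩
        rw [show ε / 72 = ε / 36 / 2 by ring]
        exact hg' i
      have := FatCover.fat_convexHull_le (by positivity) (by linarith) hd hH
        (fun k y s hs => hfat.2 ⟨y, s, by
          rwa [show 1 / (288 * 72) * ε = ε / 72 / 288 by ring]⟩) (x' ∘ z) r hconv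
      refine this.trans (le_of_eq ?_)
      rw [hD]
      field_simp)
  obtain ⟨N, hN, hNcard⟩ := FatCover.exists_isCover_of_values (x := x')
    (G := truncAt (2 * γ') '' convexHull ℝ H) (δ := 9 * (ε / 36)) V
    (fun g hg => hV _ ⟨g, hg, rfl⟩)
  refine ⟨N, by rwa [show ε / 2 = 2 * (9 * (ε / 36)) by ring], hNcard.trans (hVcard.trans ?_)⟩
  have e1 : ε ^ 2 * m / (630000 * 72 ^ 2 * d) * (8 * γ' / ε) = m / D * (8 * ρ) := by
    rw [hD, hρ]
    field_simp
  have e2 : 16 * (630000 * 72 ^ 2) * d / ε ^ 2 = 16 * D := by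
    rw [hD]
    ring
  have e3 : Real.exp 1 * m * (b + 1 : ℕ) / D = Real.exp 1 * (m / D) * (b + 1 : ℕ) := by ring
  rw [e1, e2, Fintype.card_fin, e3]
  calc _ = D * ((K + 1) * Real.log (Real.exp 1 * (m / D) * (b + 1 : ℕ))) := by ring
    _ ≤ D * (16 * Real.log (m / D * (8 * ρ)) ^ ((3 : ℝ) / 2)) := by gcongr
    _ = _ := by ring
end
end

section
/- There exist universal constants C' ≥ 1 and 0 < c' ≤ 1 such that: for every hypothesis class H ⊆ [−1,1]^X, every γ > 0 and every α > 0, the fat-shattering dimension of the truncated convex hull satisfies fat_α(Conv(H)_{⌈γ⌉}) ≤ C'·fat_{c'α}(H)/α². -/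
open MeasureTheory Real
open scoped ENNReal NNReal

noncomputable section

open Agb

/-- One-sided tail estimate: if no threshold splits `B` efficiently, the values above an
upper median `M` concentrate around `M` at scale `δ`. -/
lemma sum_sq_posPart_le_of_no_split {ι : Type*} (B : Finset ι) (Y : ι → ℝ) (M δ : ℝ) (hδ : 0 < δ)
    (hfail : ∀ a : ℝ, 0 < (B.filter (fun s => a + δ ≤ Y s)).card →
      0 < (B.filter (fun s => Y s ≤ a - δ)).card →
      √((B.filter (fun s => a + δ ≤ Y s)).card : ℝ) +
        √((B.filter (fun s => Y s ≤ a - δ)).card : ℝ) < √(B.card : ℝ))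
    (hmed : 2 * (B.filter (fun s => M < Y s)).card ≤ B.card) :
    ∑ s ∈ B, (max (Y s - M) 0) ^ 2 ≤ 12 * δ ^ 2 * B.card := by
  set F : ℕ → ℕ := fun j => (B.filter (fun s => M + 2 * j * δ < Y s)).card with hF
  have hcompl : ∀ j, (F j : ℝ) + ((B.filter (fun s => Y s ≤ M + 2 * j * δ)).card : ℝ)
      = B.card := by
    intro j
    have := Finset.card_filter_add_card_filter_not (s := B) (fun s => M + 2 * j * δ < Y s)
    simp only [not_lt] at this
    simp only [hF]
    exact_mod_cast this
  have hdec : ∀ j, (F j : ℝ) ≤ B.card / 2 ^ (j + 1) := by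
    intro j
    induction j with
    | zero =>
      have : (2 : ℝ) * (F 0 : ℝ) ≤ B.card := by
        simp only [hF, Nat.cast_zero, mul_zero, zero_mul, add_zero]
        exact_mod_cast hmed
      simp only [zero_add, pow_one]
      linarith
    | succ j ih =>
      suffices h : 2 * (F (j + 1) : ℝ) ≤ F j by
        rw [pow_succ, ← div_div]
        linarith
      have hhalf : 2 * (F j : ℝ) ≤ B.card := by
        have h1 : (B.card : ℝ) / 2 ^ (j + 1) ≤ B.card / 2 := by
          apply div_le_div_of_nonneg_left (by positivity) (by norm_num)
          calc (2 : ℝ) = 2 ^ 1 := by norm_num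
            _ ≤ 2 ^ (j + 1) := pow_le_pow_right₀ (by norm_num) (by omega)
        linarith
      rcases Nat.eq_zero_or_pos (F (j + 1)) with h0 | hpos
      · rw [h0]; simp
      · have hsub : F (j + 1) ≤
            (B.filter (fun s => (M + 2 * j * δ + δ) + δ ≤ Y s)).card := by
          apply Finset.card_le_card
          intro s hs
          simp only [Finset.mem_filter] at hs ⊢
          refine ⟨hs.1, ?_⟩
          have := hs.2
          push_cast at this
          linarith
        have hq : (B.filter (fun s => Y s ≤ (M + 2 * j * δ + δ) - δ)).card
            = (B.filter (fun s => Y s ≤ M + 2 * j * δ)).card := by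
          simp
        have hBpos : (0 : ℝ) < B.card := by
          have : F (j + 1) ≤ B.card := Finset.card_filter_le _ _
          exact_mod_cast lt_of_lt_of_le hpos this
        have hqpos : 0 < (B.filter (fun s => Y s ≤ M + 2 * j * δ)).card := by
          have := hcompl j
          have h2 : (0 : ℝ) < ((B.filter (fun s => Y s ≤ M + 2 * j * δ)).card : ℝ) := by linarith
          exact_mod_cast h2
        have hf := hfail (M + 2 * j * δ + δ) (lt_of_lt_of_le hpos hsub) (by rw [hq]; exact hqpos)
        rw [hq] at hf
        have hmono : √(F (j + 1) : ℝ) ≤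
            √((B.filter (fun s => (M + 2 * j * δ + δ) + δ ≤ Y s)).card : ℝ) :=
          Real.sqrt_le_sqrt (by exact_mod_cast hsub)
        set u := √(F (j + 1) : ℝ) with hu
        set w := √((B.filter (fun s => Y s ≤ M + 2 * j * δ)).card : ℝ) with hw
        set n := √(B.card : ℝ) with hn
        have hu2 : u ^ 2 = F (j + 1) := Real.sq_sqrt (by positivity)
        have hw2 : w ^ 2 = ((B.filter (fun s => Y s ≤ M + 2 * j * δ)).card : ℝ) :=
          Real.sq_sqrt (by positivity)
        have hn2 : n ^ 2 = B.card := Real.sq_sqrt (by positivity)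
        have hu0 : 0 ≤ u := Real.sqrt_nonneg _
        have hw0 : 0 ≤ w := Real.sqrt_nonneg _
        have hn0 : 0 ≤ n := Real.sqrt_nonneg _
        have hc := hcompl j
        have huw : u < n - w := by linarith
        have h3w : n ≤ 3 * w := by
          refine (sq_le_sq₀ hn0 (by positivity)).mp ?_
          nlinarith
        nlinarith [mul_nonneg (by linarith : (0 : ℝ) ≤ n - w) (by linarith : (0 : ℝ) ≤ 3 * w - n)]
  have hpt : ∀ (y : ℝ) (J : ℕ), (min (max y 0) (2 * J * δ)) ^ 2 ≤
      4 * δ ^ 2 * ∑ j ∈ Finset.range J, (2 * (j : ℝ) + 1) * (if 2 * j * δ < y then 1 else 0) := by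
    intro y J
    induction J with
    | zero => simp
    | succ J ih =>
      rw [Finset.sum_range_succ]
      by_cases h : 2 * J * δ < y
      · have h0 : (0 : ℝ) ≤ 2 * J * δ := by positivity
        rw [min_eq_right (le_trans h.le (le_max_left _ _))] at ih
        have h1 : (min (max y 0) (2 * ((J + 1 : ℕ) : ℝ) * δ)) ^ 2 ≤
            (2 * ((J + 1 : ℕ) : ℝ) * δ) ^ 2 := by
          apply pow_le_pow_left₀ (le_min (le_max_right _ _) (by positivity)) (min_le_right _ _)
        refine h1.trans ?_
        rw [if_pos h]
        push_cast
        nlinarith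
      · rw [if_neg h]
        have h0 : (0 : ℝ) ≤ 2 * J * δ := by positivity
        have hm : max y 0 ≤ 2 * J * δ := max_le (not_lt.mp h) h0
        rw [min_eq_left hm] at ih
        rw [min_eq_left (hm.trans (by push_cast; nlinarith))]
        simpa using ih
  obtain ⟨J, hJ⟩ : ∃ J : ℕ, ∀ s ∈ B, max (Y s - M) 0 ≤ 2 * J * δ := by
    obtain ⟨J, hJ⟩ := exists_nat_ge ((∑ s ∈ B, max (Y s - M) 0) / (2 * δ))
    refine ⟨J, fun s hs => ?_⟩
    rw [div_le_iff₀ (by positivity)] at hJ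
    have := Finset.single_le_sum (f := fun s => max (Y s - M) 0)
      (fun s _ => le_max_right _ _) hs
    linarith
  have hgeom : ∀ J : ℕ, ∑ j ∈ Finset.range J, (2 * (j : ℝ) + 1) / 2 ^ (j + 1)
      = 3 - (2 * J + 3) / 2 ^ J := by
    intro J
    induction J with
    | zero => simp
    | succ J ih =>
      rw [Finset.sum_range_succ, ih]
      push_cast
      field_simp
      ring
  calc ∑ s ∈ B, (max (Y s - M) 0) ^ 2
      ≤ ∑ s ∈ B, 4 * δ ^ 2 * ∑ j ∈ Finset.range J,
          (2 * (j : ℝ) + 1) * (if 2 * j * δ < Y s - M then 1 else 0) := by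
        apply Finset.sum_le_sum
        intro s hs
        have := hpt (Y s - M) J
        rwa [min_eq_left (hJ s hs)] at this
    _ = 4 * δ ^ 2 * ∑ j ∈ Finset.range J, (2 * (j : ℝ) + 1) * F j := by
        rw [← Finset.mul_sum, Finset.sum_comm]
        congr 1
        apply Finset.sum_congr rfl
        intro j _
        rw [← Finset.mul_sum]
        congr 1
        rw [Finset.sum_boole]
        simp only [hF, lt_sub_iff_add_lt']
    _ ≤ 4 * δ ^ 2 * ∑ j ∈ Finset.range J, (2 * (j : ℝ) + 1) * (B.card / 2 ^ (j + 1)) := by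
        gcongr with j hj
        exact hdec j
    _ = 4 * δ ^ 2 * (B.card * (3 - (2 * J + 3) / 2 ^ J)) := by
        rw [← hgeom, Finset.mul_sum (Finset.range J) _ (B.card : ℝ)]
        congr 1
        apply Finset.sum_congr rfl
        intro j _
        ring
    _ ≤ 12 * δ ^ 2 * B.card := by
        have : (0 : ℝ) ≤ (2 * J + 3) / 2 ^ J := by positivity
        have h2 : (B.card : ℝ) * (3 - (2 * J + 3) / 2 ^ J) ≤ B.card * 3 := by
          gcongr
          linarith
        nlinarith [sq_nonneg δ]

/-- Existence of a median of finitely many reals. -/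
lemma exists_median {ι : Type*} (B : Finset ι) (Y : ι → ℝ) :
    ∃ M : ℝ, 2 * (B.filter (fun s => M < Y s)).card ≤ B.card ∧
      2 * (B.filter (fun s => Y s < M)).card ≤ B.card := by
  rcases B.eq_empty_or_nonempty with rfl | hB
  · exact ⟨0, by simp⟩
  set U := B.filter (fun s => 2 * (B.filter (fun t => Y s < Y t)).card ≤ B.card) with hU
  have hUne : U.Nonempty := by
    obtain ⟨s, hs, hmax⟩ := B.exists_max_image Y hB
    refine ⟨s, Finset.mem_filter.mpr ⟨hs, ?_⟩⟩
    rw [Finset.filter_eq_empty_iff.mpr fun t ht => not_lt.mpr (hmax t ht)]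
    simp
  obtain ⟨m, hm, hmin⟩ := U.exists_min_image Y hUne
  refine ⟨Y m, (Finset.mem_filter.mp hm).2, ?_⟩
  by_contra! hcon
  have hne : (B.filter (fun s => Y s < Y m)).Nonempty := by
    rw [← Finset.card_pos]; omega
  obtain ⟨s, hs, hsmax⟩ := Finset.exists_max_image _ Y hne
  rw [Finset.mem_filter] at hs
  have hsU : s ∈ U := by
    refine Finset.mem_filter.mpr ⟨hs.1, ?_⟩
    have h1 := Finset.card_filter_add_card_filter_not (s := B) (fun t => Y t < Y m)
    have h2 : (B.filter (fun t => Y s < Y t)).card ≤ (B.filter (fun t => ¬ Y t < Y m)).card := by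
      apply Finset.card_le_card
      intro t ht
      rw [Finset.mem_filter] at ht ⊢
      refine ⟨ht.1, fun hlt => ?_⟩
      exact absurd ht.2 (not_lt.mpr (hsmax t (Finset.mem_filter.mpr ⟨ht.1, hlt⟩)))
    omega
  exact absurd hs.2 (not_lt.mpr (hmin s hsU))

/-- Small deviation principle: finitely many reals spread at scale `δ` are efficiently split by
some threshold. -/
lemma exists_split_of_spread {ι : Type*} (B : Finset ι) (Y : ι → ℝ) (δ : ℝ) (hδ : 0 < δ)
    (hspread : ∀ M : ℝ, 24 * δ ^ 2 * B.card < ∑ s ∈ B, (Y s - M) ^ 2) :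
    ∃ a : ℝ, 0 < (B.filter (fun s => a + δ ≤ Y s)).card ∧
      0 < (B.filter (fun s => Y s ≤ a - δ)).card ∧
      √(B.card : ℝ) ≤ √((B.filter (fun s => a + δ ≤ Y s)).card : ℝ) +
        √((B.filter (fun s => Y s ≤ a - δ)).card : ℝ) := by
  by_contra! hfail
  obtain ⟨M, hM1, hM2⟩ := exists_median B Y
  have h1 := sum_sq_posPart_le_of_no_split B Y M δ hδ hfail hM1
  have h2 := sum_sq_posPart_le_of_no_split B (fun s => - Y s) (-M) δ hδ (by
    intro a hp hq
    have e1 : ∀ s, (a + δ ≤ - Y s) ↔ (Y s ≤ -a - δ) := fun s => by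
      constructor <;> intro h <;> linarith
    have e2 : ∀ s, (- Y s ≤ a - δ) ↔ (-a + δ ≤ Y s) := fun s => by
      constructor <;> intro h <;> linarith
    simp only [e1, e2] at hp hq ⊢
    rw [add_comm]
    exact hfail (-a) hq hp) (by simpa using hM2)
  have h3 : ∑ s ∈ B, (Y s - M) ^ 2 =
      ∑ s ∈ B, (max (Y s - M) 0) ^ 2 + ∑ s ∈ B, (max (- Y s - -M) 0) ^ 2 := by
    rw [← Finset.sum_add_distrib]
    apply Finset.sum_congr rfl
    intro s _
    rcases le_total (Y s - M) 0 with h | h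
    · rw [max_eq_right h, max_eq_left (by linarith)]; ring
    · rw [max_eq_left h, max_eq_right (by linarith)]; ring
  have := hspread M
  linarith

/-- A separated finite family of vectors is efficiently split along some coordinate. -/
lemma exists_coordinate_split {ι κ : Type*} [Fintype κ] [DecidableEq ι] (f : ι → κ → ℝ) (ε : ℝ)
    (hε : 0 < ε) (B : Finset ι) (hB : 2 ≤ B.card)
    (hsep : ∀ s ∈ B, ∀ t ∈ B, s ≠ t →
      Fintype.card κ * (ε ^ 2 / 2) ≤ ∑ i, (f s i - f t i) ^ 2)
    (hκ : 0 < Fintype.card κ) :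
    ∃ (i : κ) (a : ℝ), 0 < (B.filter (fun s => a + ε / 20 ≤ f s i)).card ∧
      0 < (B.filter (fun s => f s i ≤ a - ε / 20)).card ∧
      √(B.card : ℝ) ≤ √((B.filter (fun s => a + ε / 20 ≤ f s i)).card : ℝ) +
        √((B.filter (fun s => f s i ≤ a - ε / 20)).card : ℝ) := by
  by_contra! hcon
  have hM : ∀ i, ∃ M : ℝ, ∑ s ∈ B, (f s i - M) ^ 2 ≤ 24 * (ε / 20) ^ 2 * B.card := by
    intro i
    by_contra! h
    obtain ⟨a, h1, h2, h3⟩ := exists_split_of_spread B (fun s => f s i) (ε / 20) (by positivity) h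
    exact absurd h3 (not_le.mpr (hcon i a h1 h2))
  choose M hM using hM
  have hup : ∑ s ∈ B, ∑ t ∈ B, ∑ i, (f s i - f t i) ^ 2
      ≤ Fintype.card κ * (96 * (ε / 20) ^ 2 * (B.card : ℝ) ^ 2) := by
    have e : ∑ s ∈ B, ∑ t ∈ B, ∑ i, (f s i - f t i) ^ 2
        = ∑ i, ∑ s ∈ B, ∑ t ∈ B, (f s i - f t i) ^ 2 := by
      rw [Finset.sum_comm]
      rw [Finset.sum_congr rfl fun s _ => Finset.sum_comm]
      rw [Finset.sum_comm]
      refine Finset.sum_congr rfl fun i _ => Finset.sum_comm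
    rw [e, ← nsmul_eq_mul, ← Finset.card_univ]
    apply Finset.sum_le_card_nsmul
    intro i _
    calc ∑ s ∈ B, ∑ t ∈ B, (f s i - f t i) ^ 2
        ≤ ∑ s ∈ B, ∑ t ∈ B, (2 * (f s i - M i) ^ 2 + 2 * (f t i - M i) ^ 2) := by
          gcongr with s _ t _
          nlinarith [sq_nonneg ((f s i - M i) + (f t i - M i))]
      _ = 4 * B.card * ∑ s ∈ B, (f s i - M i) ^ 2 := by
          simp only [Finset.sum_add_distrib, Finset.sum_const, nsmul_eq_mul, ← Finset.mul_sum]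
          ring
      _ ≤ 4 * B.card * (24 * (ε / 20) ^ 2 * B.card) := by
          gcongr
          exact hM i
      _ = _ := by ring
  have hlow : (B.card : ℝ) * ((B.card - 1) * (Fintype.card κ * (ε ^ 2 / 2)))
      ≤ ∑ s ∈ B, ∑ t ∈ B, ∑ i, (f s i - f t i) ^ 2 := by
    rw [← nsmul_eq_mul]
    apply Finset.card_nsmul_le_sum
    intro s hs
    calc ((B.card : ℝ) - 1) * (Fintype.card κ * (ε ^ 2 / 2))
        = (B.erase s).card • ((Fintype.card κ : ℝ) * (ε ^ 2 / 2)) := by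
          rw [nsmul_eq_mul, Finset.card_erase_of_mem hs, Nat.cast_sub (by omega)]
          simp
      _ ≤ ∑ t ∈ B.erase s, ∑ i, (f s i - f t i) ^ 2 := by
          apply Finset.card_nsmul_le_sum
          intro t ht
          rw [Finset.mem_erase] at ht
          exact hsep s hs t ht.2 (Ne.symm ht.1)
      _ ≤ _ := Finset.sum_le_sum_of_subset_of_nonneg (Finset.erase_subset _ _)
          fun t _ _ => Finset.sum_nonneg fun i _ => sq_nonneg _
  have hB' : (2 : ℝ) ≤ B.card := by exact_mod_cast hB
  have hκ' : (0 : ℝ) < Fintype.card κ := by exact_mod_cast hκ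
  have hle := hlow.trans hup
  have hP : (0 : ℝ) < Fintype.card κ * ε ^ 2 := by positivity
  have hle' : (Fintype.card κ * ε ^ 2) * ((B.card : ℝ) * ((B.card - 1) / 2))
      ≤ (Fintype.card κ * ε ^ 2) * (96 / 400 * (B.card : ℝ) ^ 2) := by
    calc _ = (B.card : ℝ) * ((B.card - 1) * (Fintype.card κ * (ε ^ 2 / 2))) := by ring
      _ ≤ _ := hle
      _ = _ := by ring
  have := le_of_mul_le_mul_left hle' hP
  nlinarith

/-- Partial level assignments `ρ` (with levels `v g`) whose domain is shattered with margin `η`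
by the members of `B`. -/
def shatteredLevels {ι G : Type*} [Fintype G] {m : ℕ} (f : ι → Fin m → ℝ) (v : G → ℝ) (η : ℝ)
    (B : Finset ι) : Finset (Fin m → Option G) :=
  open Classical in
  Finset.univ.filter fun ρ => ∀ b : Fin m → Bool, ∃ s ∈ B, ∀ i g, ρ i = some g →
    (b i = true → v g + η ≤ f s i) ∧ (b i = false → f s i ≤ v g - η)

lemma mem_shatteredLevels {ι G : Type*} [Fintype G] {m : ℕ} {f : ι → Fin m → ℝ} {v : G → ℝ}
    {η : ℝ} {B : Finset ι} {ρ : Fin m → Option G} :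
    ρ ∈ shatteredLevels f v η B ↔ ∀ b : Fin m → Bool, ∃ s ∈ B, ∀ i g, ρ i = some g →
      (b i = true → v g + η ≤ f s i) ∧ (b i = false → f s i ≤ v g - η) := by
  simp [shatteredLevels]

lemma shatteredLevels_mono {ι G : Type*} [Fintype G] {m : ℕ} (f : ι → Fin m → ℝ) (v : G → ℝ)
    (η : ℝ) {B B' : Finset ι} (h : B ⊆ B') :
    shatteredLevels f v η B ⊆ shatteredLevels f v η B' := by
  intro ρ hρ
  rw [mem_shatteredLevels] at hρ ⊢
  intro b
  obtain ⟨s, hs, h'⟩ := hρ b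
  exact ⟨s, h hs, h'⟩

/-- Splitting `B` along one coordinate and level makes the number of shattered level assignments
superadditive. -/
lemma card_shatteredLevels_split {ι G : Type*} [Fintype G] {m : ℕ}
    (f : ι → Fin m → ℝ) (v : G → ℝ) (η : ℝ) (hη : 0 < η) (B : Finset ι) (i : Fin m) (g : G) :
    (shatteredLevels f v η (B.filter fun s => v g + η ≤ f s i)).card +
      (shatteredLevels f v η (B.filter fun s => f s i ≤ v g - η)).card
      ≤ (shatteredLevels f v η B).card := by
  classical
  set B₁ := B.filter fun s => v g + η ≤ f s i with hB₁
  set B₂ := B.filter fun s => f s i ≤ v g - η with hB₂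
  set S₁ := shatteredLevels f v η B₁ with hS₁
  set S₂ := shatteredLevels f v η B₂ with hS₂
  have hnone : ∀ ρ ∈ S₁ ∩ S₂, ρ i = none := by
    intro ρ hρ
    rw [Finset.mem_inter, hS₁, hS₂, mem_shatteredLevels, mem_shatteredLevels] at hρ
    by_contra hne
    obtain ⟨g', hg'⟩ := Option.ne_none_iff_exists'.mp hne
    obtain ⟨s, hs, h1⟩ := hρ.1 fun _ => false
    obtain ⟨t, ht, h2⟩ := hρ.2 fun _ => true
    have h1' := (h1 i g' hg').2 rfl
    have h2' := (h2 i g' hg').1 rfl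
    rw [hB₁, Finset.mem_filter] at hs
    rw [hB₂, Finset.mem_filter] at ht
    linarith [hs.2, ht.2]
  set E := (S₁ ∩ S₂).image fun ρ => Function.update ρ i (some g) with hE
  have hEcard : E.card = (S₁ ∩ S₂).card := by
    apply Finset.card_image_of_injOn
    intro ρ hρ ρ' hρ' heq
    funext j
    by_cases hj : j = i
    · rw [hj, hnone ρ hρ, hnone ρ' hρ']
    · have := congrFun heq j
      simpa [hj] using this
  have hdisj : Disjoint (S₁ ∪ S₂) E := by
    rw [Finset.disjoint_left]
    intro ρ hρ hρE
    obtain ⟨ρ₀, -, rfl⟩ := Finset.mem_image.mp hρE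
    rcases Finset.mem_union.mp hρ with h | h
    · rw [hS₁, mem_shatteredLevels] at h
      obtain ⟨s, hs, h1⟩ := h fun _ => false
      have := (h1 i g (by simp)).2 rfl
      rw [hB₁, Finset.mem_filter] at hs
      linarith [hs.2]
    · rw [hS₂, mem_shatteredLevels] at h
      obtain ⟨s, hs, h1⟩ := h fun _ => true
      have := (h1 i g (by simp)).1 rfl
      rw [hB₂, Finset.mem_filter] at hs
      linarith [hs.2]
  have hsub : (S₁ ∪ S₂) ∪ E ⊆ shatteredLevels f v η B := by
    refine Finset.union_subset (Finset.union_subset ?_ ?_) ?_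
    · exact shatteredLevels_mono f v η (Finset.filter_subset _ _)
    · exact shatteredLevels_mono f v η (Finset.filter_subset _ _)
    · intro ρ hρE
      obtain ⟨ρ, hρ, rfl⟩ := Finset.mem_image.mp hρE
      rw [Finset.mem_inter, hS₁, hS₂, mem_shatteredLevels, mem_shatteredLevels] at hρ
      rw [mem_shatteredLevels]
      intro b
      cases hb : b i with
      | true =>
        obtain ⟨s, hs, h1⟩ := hρ.1 b
        rw [hB₁, Finset.mem_filter] at hs
        refine ⟨s, hs.1, fun j g' hj => ?_⟩
        by_cases hji : j = i
        · subst hji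
          simp only [Function.update_self, Option.some.injEq] at hj
          subst hj
          exact ⟨fun _ => hs.2, fun h => by simp [hb] at h⟩
        · rw [Function.update_of_ne hji] at hj
          exact h1 j g' hj
      | false =>
        obtain ⟨s, hs, h1⟩ := hρ.2 b
        rw [hB₂, Finset.mem_filter] at hs
        refine ⟨s, hs.1, fun j g' hj => ?_⟩
        by_cases hji : j = i
        · subst hji
          simp only [Function.update_self, Option.some.injEq] at hj
          subst hj
          exact ⟨fun h => by simp [hb] at h, fun _ => hs.2⟩
        · rw [Function.update_of_ne hji] at hj
          exact h1 j g' hj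
  calc S₁.card + S₂.card = (S₁ ∪ S₂).card + (S₁ ∩ S₂).card :=
        (Finset.card_union_add_card_inter _ _).symm
    _ = ((S₁ ∪ S₂) ∪ E).card := by rw [Finset.card_union_of_disjoint hdisj, hEcard]
    _ ≤ _ := Finset.card_le_card hsub

/-- A family all of whose subfamilies split efficiently shatters many level assignments. -/
lemma sqrt_card_le_card_shatteredLevels {ι G : Type*} [Fintype G] {m : ℕ}
    (f : ι → Fin m → ℝ) (v : G → ℝ) (η : ℝ) (hη : 0 < η) (A : Finset ι)
    (hsplit : ∀ B ⊆ A, 2 ≤ B.card → ∃ (i : Fin m) (g : G),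
      0 < (B.filter (fun s => v g + η ≤ f s i)).card ∧
      0 < (B.filter (fun s => f s i ≤ v g - η)).card ∧
      √(B.card : ℝ) ≤ √((B.filter (fun s => v g + η ≤ f s i)).card : ℝ) +
        √((B.filter (fun s => f s i ≤ v g - η)).card : ℝ)) :
    ∀ B ⊆ A, √(B.card : ℝ) ≤ ((shatteredLevels f v η B).card : ℝ) := by
  intro B
  induction B using Finset.strongInduction with
  | H B ih =>
    intro hBA
    rcases lt_or_ge B.card 2 with hlt | hge
    · rcases Nat.eq_zero_or_pos B.card with h0 | hpos
      · simp [h0]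
      · have h1 : B.card = 1 := by omega
        obtain ⟨s, hs⟩ := Finset.card_pos.mp hpos
        have : 0 < (shatteredLevels f v η B).card := by
          refine Finset.card_pos.mpr ⟨fun _ => none, ?_⟩
          rw [mem_shatteredLevels]
          exact fun b => ⟨s, hs, fun i g h => by simp at h⟩
        rw [h1]
        simp only [Nat.cast_one, Real.sqrt_one]
        exact_mod_cast this
    · obtain ⟨i, g, hp, hq, hs⟩ := hsplit B hBA hge
      have hp' := hp
      have hq' := hq
      rw [Finset.card_pos] at hp' hq'
      obtain ⟨s, hs1⟩ := hp'
      obtain ⟨t, ht1⟩ := hq'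
      rw [Finset.mem_filter] at hs1 ht1
      have hs₁ : B.filter (fun s => v g + η ≤ f s i) ⊂ B :=
        Finset.filter_ssubset.mpr ⟨t, ht1.1, by linarith [ht1.2]⟩
      have hs₂ : B.filter (fun s => f s i ≤ v g - η) ⊂ B :=
        Finset.filter_ssubset.mpr ⟨s, hs1.1, by linarith [hs1.2]⟩
      have h1 := ih _ hs₁ (hs₁.1.trans hBA)
      have h2 := ih _ hs₂ (hs₂.1.trans hBA)
      have h3 : (((shatteredLevels f v η (B.filter fun s => v g + η ≤ f s i)).card : ℝ) +
          (shatteredLevels f v η (B.filter fun s => f s i ≤ v g - η)).card)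
          ≤ (shatteredLevels f v η B).card := by
        exact_mod_cast card_shatteredLevels_split f v η hη B i g
      linarith

/-- Generating-function bound on the number of partial functions with small domain. -/
lemma card_mul_pow_le_of_support_le {G : Type*} [Fintype G] {m V : ℕ}
    (S : Finset (Fin m → Option G)) (y : ℝ) (hy0 : 0 ≤ y) (hy1 : y ≤ 1)
    (hS : ∀ ρ ∈ S, (Finset.univ.filter fun i => (ρ i).isSome = true).card ≤ V) :
    (S.card : ℝ) * y ^ V ≤ Real.exp (Fintype.card G * y * m) := by
  calc (S.card : ℝ) * y ^ V = ∑ ρ ∈ S, y ^ V := by rw [Finset.sum_const, nsmul_eq_mul]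
    _ ≤ ∑ ρ ∈ S, ∏ i, (if (ρ i).isSome = true then y else 1) := by
        apply Finset.sum_le_sum
        intro ρ hρ
        rw [Finset.prod_ite, Finset.prod_const, Finset.prod_const_one, mul_one]
        exact pow_le_pow_of_le_one hy0 hy1 (hS ρ hρ)
    _ ≤ ∑ ρ : Fin m → Option G, ∏ i, (if (ρ i).isSome = true then y else 1) := by
        apply Finset.sum_le_sum_of_subset_of_nonneg (Finset.subset_univ _)
        intro ρ _ _
        apply Finset.prod_nonneg
        intro i _
        split_ifs <;> linarith
    _ = (∑ o : Option G, if o.isSome = true then y else 1) ^ m :=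
        (Fintype.sum_pow (fun o : Option G => if o.isSome = true then y else 1) m).symm
    _ = (1 + Fintype.card G * y) ^ m := by
        congr 1
        rw [Fintype.sum_option]
        simp
    _ ≤ (Real.exp (Fintype.card G * y)) ^ m := by
        apply pow_le_pow_left₀ (by positivity)
        linarith [Real.add_one_le_exp (Fintype.card G * y)]
    _ = _ := by rw [← Real.exp_nat_mul]; ring_nf

/-- Probabilistic extraction: a separated family stays separated on few (repeated) coordinates. -/
lemma exists_separating_sample {ι : Type*} [DecidableEq ι] {d : ℕ} (hd : 0 < d)
    (f : ι → Fin d → ℝ) (hf : ∀ s i, |f s i| ≤ 1) (ε : ℝ)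
    (T : Finset ι) (hT : T.Nonempty)
    (hsep : ∀ s ∈ T, ∀ t ∈ T, s ≠ t → ε ^ 2 * d ≤ ∑ i, (f s i - f t i) ^ 2)
    (m : ℕ) (hm : 128 * Real.log T.card ≤ m * ε ^ 2) :
    ∃ φ : Fin m → Fin d, ∀ s ∈ T, ∀ t ∈ T, s ≠ t →
      m * (ε ^ 2 / 2) ≤ ∑ j, (f s (φ j) - f t (φ j)) ^ 2 := by
  by_contra! hcon
  have hd' : (0 : ℝ) < d := by exact_mod_cast hd
  have hTpos : (0 : ℝ) < T.card := by exact_mod_cast hT.card_pos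
  have hpt : ∀ s t i, Real.exp (-((f s i - f t i) ^ 2 / 16)) ≤
      1 - 3 / 64 * (f s i - f t i) ^ 2 := by
    intro s t i
    have h1 := abs_le.mp (hf s i)
    have h2 := abs_le.mp (hf t i)
    set Y := (f s i - f t i) ^ 2 with hY
    have hY0 : 0 ≤ Y := sq_nonneg _
    have hY4 : Y ≤ 4 := by
      rw [hY]; nlinarith
    have h := Real.abs_exp_sub_one_sub_id_le (x := -(Y / 16)) (by
      rw [abs_neg, abs_of_nonneg (by positivity)]; linarith)
    have h' := (abs_le.mp h).2
    nlinarith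
  have hmgf : ∀ s ∈ T, ∀ t ∈ T, s ≠ t →
      ∑ i, Real.exp (-((f s i - f t i) ^ 2 / 16)) ≤ d * Real.exp (-(3 / 64 * ε ^ 2)) := by
    intro s hs t ht hst
    calc ∑ i, Real.exp (-((f s i - f t i) ^ 2 / 16))
        ≤ ∑ i, (1 - 3 / 64 * (f s i - f t i) ^ 2) := Finset.sum_le_sum fun i _ => hpt s t i
      _ = d - 3 / 64 * ∑ i, (f s i - f t i) ^ 2 := by
          rw [Finset.sum_sub_distrib, ← Finset.mul_sum]; simp
      _ ≤ d - 3 / 64 * (ε ^ 2 * d) := by linarith [hsep s hs t ht hst]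
      _ = d * (-(3 / 64 * ε ^ 2) + 1) := by ring
      _ ≤ _ := by gcongr; exact Real.add_one_le_exp _
  have hlow : (d : ℝ) ^ m ≤ ∑ φ : Fin m → Fin d, ∑ p ∈ T.offDiag,
      Real.exp (m * ε ^ 2 / 32) * ∏ j, Real.exp (-((f p.1 (φ j) - f p.2 (φ j)) ^ 2 / 16)) := by
    have : (d : ℝ) ^ m = ∑ φ : Fin m → Fin d, (1 : ℝ) := by simp
    rw [this]
    apply Finset.sum_le_sum
    intro φ _
    obtain ⟨s, hs, t, ht, hst, hlt⟩ := hcon φ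
    refine le_trans ?_ (Finset.single_le_sum (a := (s, t)) (fun p _ => by positivity)
      (Finset.mem_offDiag.mpr ⟨hs, ht, hst⟩))
    rw [← Real.exp_sum, ← Real.exp_add, Real.one_le_exp_iff, Finset.sum_neg_distrib,
      ← Finset.sum_div]
    linarith
  have hup : ∑ φ : Fin m → Fin d, ∑ p ∈ T.offDiag,
      Real.exp (m * ε ^ 2 / 32) * ∏ j, Real.exp (-((f p.1 (φ j) - f p.2 (φ j)) ^ 2 / 16))
      ≤ T.offDiag.card * ((d : ℝ) ^ m * Real.exp (-(m * ε ^ 2 / 64))) := by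
    rw [Finset.sum_comm, ← nsmul_eq_mul T.offDiag.card]
    apply Finset.sum_le_card_nsmul
    rintro ⟨s, t⟩ hp
    obtain ⟨hs, ht, hst⟩ := Finset.mem_offDiag.mp hp
    rw [← Finset.mul_sum,
      ← Fintype.sum_pow (fun i => Real.exp (-((f s i - f t i) ^ 2 / 16))) m]
    calc Real.exp (m * ε ^ 2 / 32) * (∑ i, Real.exp (-((f s i - f t i) ^ 2 / 16))) ^ m
        ≤ Real.exp (m * ε ^ 2 / 32) * (d * Real.exp (-(3 / 64 * ε ^ 2))) ^ m := by
          gcongr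
          exact hmgf s hs t ht hst
      _ = (d : ℝ) ^ m * (Real.exp (m * ε ^ 2 / 32) * Real.exp (m * (-(3 / 64 * ε ^ 2)))) := by
          rw [mul_pow, Real.exp_nat_mul]; ring
      _ = _ := by
          rw [← Real.exp_add]; ring_nf
  have hexp : Real.exp (-(m * ε ^ 2 / 64)) * (T.card : ℝ) ^ 2 ≤ 1 := by
    have : (T.card : ℝ) ^ 2 = Real.exp (2 * Real.log T.card) := by
      rw [← Real.log_rpow hTpos, Real.exp_log (by positivity)]
      norm_num
    rw [this, ← Real.exp_add, Real.exp_le_one_iff]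
    linarith
  have hoff : (T.offDiag.card : ℝ) < (T.card : ℝ) ^ 2 := by
    have h1 : T.offDiag.card < T.card ^ 2 := by
      rw [Finset.offDiag_card, sq]
      have : 0 < T.card := hT.card_pos
      have : 0 < T.card * T.card := by positivity
      omega
    exact_mod_cast h1
  have hfin : (d : ℝ) ^ m * 1 < (d : ℝ) ^ m * 1 := by
    calc (d : ℝ) ^ m * 1 ≤ T.offDiag.card * ((d : ℝ) ^ m * Real.exp (-(m * ε ^ 2 / 64))) := by
          rw [mul_one]; exact hlow.trans hup
      _ = ((d : ℝ) ^ m * Real.exp (-(m * ε ^ 2 / 64))) * T.offDiag.card := by ring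
      _ < ((d : ℝ) ^ m * Real.exp (-(m * ε ^ 2 / 64))) * (T.card : ℝ) ^ 2 := by
          gcongr
      _ = (d : ℝ) ^ m * (Real.exp (-(m * ε ^ 2 / 64)) * (T.card : ℝ) ^ 2) := by ring
      _ ≤ _ := by gcongr
  exact lt_irrefl _ hfin

lemma Agb.FatShatters.mono {Z : Type*} {H H' : Set (Z → ℝ)} {α α' : ℝ} {q : ℕ} {x : Fin q → Z}
    {r : Fin q → ℝ} (h : FatShatters H α x r) (hH : H ⊆ H') (hα : α' ≤ α) :
    FatShatters H' α' x r := by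
  intro b
  obtain ⟨g, hg, hb⟩ := h b
  exact ⟨g, hH hg, fun i => ⟨fun hi => by linarith [(hb i).1 hi],
    fun hi => by linarith [(hb i).2 hi]⟩⟩

/-- The domain of a shattered level assignment is fat-shattered. -/
lemma fatShatters_of_mem_shatteredLevels {ι G Z : Type*} [Fintype G] {m : ℕ} (f : ι → Z → ℝ)
    (φ : Fin m → Z) (v : G → ℝ) (η : ℝ) (B : Finset ι) (ρ : Fin m → Option G)
    (hρ : ρ ∈ shatteredLevels (fun s j => f s (φ j)) v η B) :
    ∃ (x : Fin (Finset.univ.filter fun i => (ρ i).isSome = true).card → Z)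
      (r : Fin (Finset.univ.filter fun i => (ρ i).isSome = true).card → ℝ),
      FatShatters (Set.range f) η x r := by
  set S := Finset.univ.filter fun i => (ρ i).isSome = true with hS
  have hsome : ∀ j : S, (ρ j).isSome = true := fun j => (Finset.mem_filter.mp j.2).2
  refine ⟨fun j => φ (S.equivFin.symm j),
    fun j => v ((ρ (S.equivFin.symm j)).get (hsome _)), fun b => ?_⟩
  rw [mem_shatteredLevels] at hρ
  obtain ⟨s, -, hs⟩ := hρ fun i => if h : i ∈ S then b (S.equivFin ⟨i, h⟩) else true
  refine ⟨f s, ⟨s, rfl⟩, fun j => ?_⟩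
  have h := hs (S.equivFin.symm j) ((ρ (S.equivFin.symm j)).get (hsome _))
    (Option.some_get _).symm
  simpa using h

/-- Dimension-free entropy bound: a family separated at scale `ε` in normalized `L₂` has
log-cardinality controlled by its fat-shattering dimension at scale `ε / 40`. -/
lemma log_card_le_of_separated {ι : Type*} {d V : ℕ} (hd : 0 < d)
    (f : ι → Fin d → ℝ) (hf : ∀ s i, |f s i| ≤ 1) (ε : ℝ) (hε : 0 < ε) (hε2 : ε ≤ 2)
    (T : Finset ι)
    (hsep : ∀ s ∈ T, ∀ t ∈ T, s ≠ t → ε ^ 2 * d ≤ ∑ i, (f s i - f t i) ^ 2)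
    (hV : ∀ (q : ℕ) (x : Fin q → Fin d) (r : Fin q → ℝ),
      FatShatters (Set.range f) (ε / 40) x r → q ≤ V) :
    Real.log T.card ≤ 360 * V / ε := by
  classical
  rcases lt_or_ge T.card 2 with hlt | hge
  · have h0 : Real.log T.card = 0 := by
      have : T.card = 0 ∨ T.card = 1 := by omega
      rcases this with h | h <;> simp [h]
    rw [h0]; positivity
  have hT : T.Nonempty := Finset.card_pos.mp (by omega)
  have hT2 : (2 : ℝ) ≤ T.card := by exact_mod_cast hge
  set L := Real.log T.card with hL
  have hL2 : 1 / 2 ≤ L := by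
    have h1 : Real.log 2 ≤ L := Real.log_le_log (by norm_num) hT2
    linarith [Real.log_two_gt_d9]
  set m := ⌈128 * L / ε ^ 2⌉₊ with hm
  have hm1 : 128 * L / ε ^ 2 ≤ m := Nat.le_ceil _
  have hm2 : (m : ℝ) < 128 * L / ε ^ 2 + 1 := Nat.ceil_lt_add_one (by positivity)
  have hm3 : (m : ℝ) ≤ 136 * L / ε ^ 2 := by
    have : 1 ≤ 8 * L / ε ^ 2 := by
      rw [le_div_iff₀ (by positivity)]; nlinarith
    have e : 136 * L / ε ^ 2 = 128 * L / ε ^ 2 + 8 * L / ε ^ 2 := by ring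
    linarith
  have hmpos : 0 < m := by
    rw [hm, Nat.ceil_pos]; positivity
  obtain ⟨φ, hφ⟩ := exists_separating_sample hd f hf ε T hT hsep m (by
    rwa [div_le_iff₀ (by positivity)] at hm1)
  set Z : ℕ := ⌈20 / ε⌉₊ with hZ
  let G := Finset.Icc (-(Z : ℤ)) Z
  let v : G → ℝ := fun g => (g : ℤ) * (ε / 20)
  have hG : (Fintype.card G : ℝ) ≤ 46 / ε := by
    have h1 : Fintype.card G = 2 * Z + 1 := by
      simp only [G, Fintype.card_coe, Int.card_Icc]; omega
    have h2 : (Z : ℝ) < 20 / ε + 1 := Nat.ceil_lt_add_one (by positivity)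
    have h3 : 1 ≤ 2 / ε := by rw [le_div_iff₀ hε]; linarith
    have e : 46 / ε = 2 * (20 / ε) + 3 * (2 / ε) := by ring
    rw [h1]; push_cast
    linarith
  have hsplit : ∀ B ⊆ T, 2 ≤ B.card → ∃ (i : Fin m) (g : G),
      0 < (B.filter (fun s => v g + ε / 40 ≤ f s (φ i))).card ∧
      0 < (B.filter (fun s => f s (φ i) ≤ v g - ε / 40)).card ∧
      √(B.card : ℝ) ≤ √((B.filter (fun s => v g + ε / 40 ≤ f s (φ i))).card : ℝ) +
        √((B.filter (fun s => f s (φ i) ≤ v g - ε / 40)).card : ℝ) := by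
    intro B hBT hB
    obtain ⟨i, a, hp, hq, hs⟩ := exists_coordinate_split (fun s j => f s (φ j)) ε hε B hB
      (by
        intro s hs t ht hst
        rw [Fintype.card_fin]
        exact hφ s (hBT hs) t (hBT ht) hst) (by simpa using hmpos)
    have ha : |a| ≤ 1 := by
      obtain ⟨s, hs⟩ := Finset.card_pos.mp hp
      obtain ⟨t, ht⟩ := Finset.card_pos.mp hq
      rw [Finset.mem_filter] at hs ht
      have h1 := abs_le.mp (hf s (φ i))
      have h2 := abs_le.mp (hf t (φ i))
      rw [abs_le]
      constructor <;> linarith [hs.2, ht.2]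
    have hround := abs_le.mp (abs_sub_round (a / (ε / 20)))
    have hscale : a / (ε / 20) * (ε / 20) = a := by field_simp
    have hbd : round (a / (ε / 20)) ∈ G := by
      have h1 : |a / (ε / 20)| ≤ 20 / ε := by
        rw [abs_div, abs_of_pos (show 0 < ε / 20 by positivity), div_le_iff₀ (by positivity)]
        field_simp
        exact ha
      have h1' := abs_le.mp h1
      have h2 : (20 / ε : ℝ) ≤ Z := Nat.le_ceil _
      have h3 : ((round (a / (ε / 20)) : ℤ) : ℝ) < ((Z + 1 : ℤ) : ℝ) := by
        push_cast; linarith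
      have h4 : ((-(Z : ℤ) - 1 : ℤ) : ℝ) < ((round (a / (ε / 20)) : ℤ) : ℝ) := by
        push_cast; linarith
      have h3' := Int.cast_lt.mp h3
      have h4' := Int.cast_lt.mp h4
      rw [Finset.mem_Icc]
      omega
    have hva : |v ⟨_, hbd⟩ - a| ≤ ε / 40 := by
      simp only [v]
      rw [abs_le]
      constructor <;> nlinarith
    have hva' := abs_le.mp hva
    have hsub1 : (B.filter (fun s => a + ε / 20 ≤ f s (φ i))) ⊆
        B.filter (fun s => v ⟨_, hbd⟩ + ε / 40 ≤ f s (φ i)) := by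
      apply Finset.monotone_filter_right
      intro s _ h
      linarith
    have hsub2 : (B.filter (fun s => f s (φ i) ≤ a - ε / 20)) ⊆
        B.filter (fun s => f s (φ i) ≤ v ⟨_, hbd⟩ - ε / 40) := by
      apply Finset.monotone_filter_right
      intro s _ h
      linarith
    refine ⟨i, ⟨_, hbd⟩, lt_of_lt_of_le hp (Finset.card_le_card hsub1),
      lt_of_lt_of_le hq (Finset.card_le_card hsub2), hs.trans ?_⟩
    gcongr
  have hcount := sqrt_card_le_card_shatteredLevels (fun s j => f s (φ j)) v (ε / 40)
    (by positivity) T hsplit T subset_rfl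
  set y : ℝ := (ε / 30) ^ 3 with hy
  have hy0 : 0 < y := by positivity
  have hy1 : y ≤ 1 := pow_le_one₀ (by positivity) (by linarith)
  have hgf := card_mul_pow_le_of_support_le (V := V)
    (shatteredLevels (fun s j => f s (φ j)) v (ε / 40) T) y hy0.le hy1 (by
      intro ρ hρ
      obtain ⟨x, r, h⟩ := fatShatters_of_mem_shatteredLevels f φ v (ε / 40) T ρ hρ
      exact hV _ x r h)
  have hexp : Fintype.card G * y * m ≤ L / 4 := by
    calc Fintype.card G * y * m ≤ 46 / ε * y * (136 * L / ε ^ 2) := by gcongr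
      _ = 6256 / 27000 * L := by rw [hy]; field_simp; norm_num
      _ ≤ L / 4 := by linarith
  have hmain : √(T.card : ℝ) * y ^ V ≤ Real.exp (L / 4) :=
    (mul_le_mul_of_nonneg_right hcount (by positivity)).trans
      (hgf.trans (Real.exp_le_exp.mpr hexp))
  have hlog := Real.log_le_log (by positivity) hmain
  rw [Real.log_exp, Real.log_mul (by positivity) (by positivity), Real.log_pow,
    Real.log_sqrt (by positivity), hy, Real.log_pow] at hlog
  have hinv : -Real.log (ε / 30) ≤ 30 / ε := by
    rw [← Real.log_inv, inv_div]
    linarith [Real.log_le_sub_one_of_pos (show 0 < 30 / ε by positivity)]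
  have hVn : (V : ℝ) * (-Real.log (ε / 30)) ≤ V * (30 / ε) := by gcongr
  have e : 360 * V / ε = 12 * (V * (30 / ε)) := by ring
  rw [e]
  push_cast at hlog
  nlinarith

/-- Every finite family has a map to a separated subfamily that moves points by a small amount. -/
lemma exists_separated_net {ι : Type*} [Fintype ι] {d : ℕ} (f : ι → Fin d → ℝ) (ρ : ℝ)
    (hρ : 0 ≤ ρ) :
    ∃ (N : Finset ι) (p : ι → ι), (∀ s, p s ∈ N) ∧
      (∀ s, ∑ i, (f s i - f (p s) i) ^ 2 ≤ ρ) ∧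
      (∀ s ∈ N, ∀ t ∈ N, s ≠ t → ρ ≤ ∑ i, (f s i - f t i) ^ 2) := by
  classical
  set P := (Finset.univ : Finset (Finset ι)).filter fun N =>
    ∀ s ∈ N, ∀ t ∈ N, s ≠ t → ρ ≤ ∑ i, (f s i - f t i) ^ 2 with hP
  obtain ⟨N, hN, hmax⟩ := P.exists_max_image Finset.card ⟨∅, by simp [hP]⟩
  have hNsep := (Finset.mem_filter.mp hN).2
  have hcov : ∀ s, ∃ t ∈ N, ∑ i, (f s i - f t i) ^ 2 ≤ ρ := by
    intro s
    by_contra! hcon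
    have hsN : s ∉ N := by
      intro hs
      have h := hcon s hs
      simp only [sub_self, ne_eq, OfNat.ofNat_ne_zero, not_false_eq_true, zero_pow,
        Finset.sum_const_zero] at h
      linarith
    have hins : insert s N ∈ P := by
      refine Finset.mem_filter.mpr ⟨Finset.mem_univ _, ?_⟩
      intro a ha b hb hab
      rcases Finset.mem_insert.mp ha with rfl | ha' <;>
        rcases Finset.mem_insert.mp hb with rfl | hb'
      · exact absurd rfl hab
      · exact (hcon b hb').le
      · simpa only [sub_sq_comm] using (hcon a ha').le
      · exact hNsep a ha' b hb' hab
    have := hmax _ hins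
    rw [Finset.card_insert_of_notMem hsN] at this
    omega
  choose p h1 h2 using hcov
  exact ⟨N, p, h1, h2, hNsep⟩

lemma bval_not (b : Bool) : bval (!b) = - bval b := by
  cases b <;> simp [bval]

lemma sum_sum_bval_mul {d : ℕ} (c : Fin d → ℝ) :
    ∑ b : Fin d → Bool, ∑ i, bval (b i) * c i = 0 := by
  have h : ∑ b : Fin d → Bool, ∑ i, bval (b i) * c i =
      ∑ b : Fin d → Bool, ∑ i, bval (!(b i)) * c i :=
    (Equiv.sum_comp (Equiv.piCongrRight fun _ : Fin d => Equiv.boolNot)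
      (fun b : Fin d → Bool => ∑ i, bval (b i) * c i)).symm
  simp only [bval_not, neg_mul, Finset.sum_neg_distrib] at h
  linarith

/-- Rademacher moment generating function bound. -/
lemma sum_exp_bval_le {d : ℕ} (z : Fin d → ℝ) :
    ∑ b : Fin d → Bool, Real.exp (∑ i, bval (b i) * z i) ≤
      2 ^ d * Real.exp ((∑ i, z i ^ 2) / 2) := by
  calc ∑ b : Fin d → Bool, Real.exp (∑ i, bval (b i) * z i)
      = ∏ i, ∑ c : Bool, Real.exp (bval c * z i) := by
        rw [Finset.prod_univ_sum, Fintype.piFinset_univ]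
        simp only [Real.exp_sum]
    _ = ∏ i, (2 * Real.cosh (z i)) := by
        apply Finset.prod_congr rfl
        intro i _
        rw [Fintype.sum_bool, Real.cosh_eq]
        simp [bval]
        ring
    _ ≤ ∏ i, (2 * Real.exp (z i ^ 2 / 2)) := by
        apply Finset.prod_le_prod
        · intro i _
          have := Real.cosh_pos (z i)
          positivity
        · intro i _
          gcongr
          exact Real.cosh_le_exp_half_sq _
    _ = _ := by
        rw [Finset.prod_mul_distrib, ← Real.exp_sum, Finset.sum_div]
        simp

/-- Massart's finite class lemma, with a free parameter `lam`. -/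
lemma sum_bval_selection_le {ι : Type*} {d : ℕ} (P : Finset ι) (z : ι → Fin d → ℝ)
    (g : (Fin d → Bool) → ι) (hg : ∀ b, g b ∈ P) (L Q lam : ℝ) (hlam : 0 < lam)
    (hL : Real.log P.card ≤ L) (hQ : ∀ p ∈ P, ∑ i, z p i ^ 2 ≤ Q) :
    ∑ b : Fin d → Bool, ∑ i, bval (b i) * z (g b) i ≤ 2 ^ d * (L / lam + lam * Q / 2) := by
  have hPpos : (0 : ℝ) < P.card := by
    exact_mod_cast Finset.card_pos.mpr ⟨_, hg fun _ => true⟩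
  set c := L + lam ^ 2 * Q / 2 with hc
  have hexp : ∑ b : Fin d → Bool, Real.exp (lam * ∑ i, bval (b i) * z (g b) i - c) ≤ 2 ^ d := by
    calc ∑ b : Fin d → Bool, Real.exp (lam * ∑ i, bval (b i) * z (g b) i - c)
        ≤ ∑ b : Fin d → Bool, ∑ p ∈ P, Real.exp (lam * ∑ i, bval (b i) * z p i - c) := by
          apply Finset.sum_le_sum
          intro b _
          exact Finset.single_le_sum
            (f := fun p => Real.exp (lam * ∑ i, bval (b i) * z p i - c))
            (fun p _ => (Real.exp_pos _).le) (hg b)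
      _ = ∑ p ∈ P, Real.exp (-c) *
            ∑ b : Fin d → Bool, Real.exp (∑ i, bval (b i) * (lam * z p i)) := by
          rw [Finset.sum_comm]
          apply Finset.sum_congr rfl
          intro p _
          rw [Finset.mul_sum]
          apply Finset.sum_congr rfl
          intro b _
          rw [← Real.exp_add, Finset.mul_sum]
          congr 1
          rw [sub_eq_neg_add]
          congr 1
          apply Finset.sum_congr rfl
          intro i _
          ring
      _ ≤ ∑ p ∈ P, Real.exp (-c) * (2 ^ d * Real.exp (lam ^ 2 * Q / 2)) := by
          apply Finset.sum_le_sum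
          intro p hp
          gcongr
          refine (sum_exp_bval_le _).trans ?_
          gcongr
          simp only [mul_pow, ← Finset.mul_sum]
          gcongr
          exact hQ p hp
      _ = 2 ^ d * (P.card * Real.exp (-L)) := by
          rw [Finset.sum_const, nsmul_eq_mul]
          have : Real.exp (-L) = Real.exp (-c) * Real.exp (lam ^ 2 * Q / 2) := by
            rw [← Real.exp_add, hc]; ring_nf
          rw [this]; ring
      _ ≤ 2 ^ d * 1 := by
          gcongr
          rw [Real.exp_neg, ← div_eq_mul_inv, div_le_one (Real.exp_pos _)]
          exact (Real.log_le_iff_le_exp hPpos).mp hL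
      _ = 2 ^ d := mul_one _
  have hlin : ∑ b : Fin d → Bool, (lam * ∑ i, bval (b i) * z (g b) i - c + 1) ≤ 2 ^ d :=
    (Finset.sum_le_sum fun b _ => Real.add_one_le_exp _).trans hexp
  rw [Finset.sum_add_distrib, Finset.sum_sub_distrib, ← Finset.mul_sum] at hlin
  simp only [Finset.sum_const, Finset.card_univ, Fintype.card_pi, Fintype.card_bool,
    Finset.prod_const, Fintype.card_fin, nsmul_eq_mul, Nat.cast_pow, Nat.cast_ofNat,
    mul_one] at hlin
  have h2 : lam * ∑ b : Fin d → Bool, ∑ i, bval (b i) * z (g b) i ≤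
      lam * (2 ^ d * (L / lam + lam * Q / 2)) := by
    calc _ ≤ 2 ^ d * c := by linarith
      _ = _ := by rw [hc]; field_simp
  exact le_of_mul_le_mul_left h2 hlam

/-- Chaining bound: a family of bounded vectors whose Rademacher average is at least `α` has large
fat-shattering dimension at a scale proportional to `α`. -/
lemma card_le_of_rademacher_average {d V : ℕ} (f : (Fin d → Bool) → Fin d → ℝ)
    (hf : ∀ s i, |f s i| ≤ 1) (α : ℝ) (hα : 0 < α)
    (hV : ∀ (q : ℕ) (x : Fin q → Fin d) (r : Fin q → ℝ),
      FatShatters (Set.range f) (α / 320) x r → q ≤ V)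
    (hcorr : 2 ^ d * (α * d) ≤ ∑ b : Fin d → Bool, ∑ i, bval (b i) * f b i) :
    (d : ℝ) ≤ 244800 * V / α ^ 2 := by
  classical
  rcases Nat.eq_zero_or_pos d with h0 | hd
  · rw [h0, Nat.cast_zero]; positivity
  set τ : ℕ → ℝ := fun k => (1 / 2) ^ k with hτ
  have hτpos : ∀ k, 0 < τ k := fun k => by simp only [hτ]; positivity
  have hτsucc : ∀ k, τ k = 2 * τ (k + 1) := fun k => by simp only [hτ, pow_succ]; ring
  have hτle : ∀ k, τ k ≤ 1 := fun k => pow_le_one₀ (by norm_num) (by norm_num)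
  have hex : ∃ K, 2 * τ K ^ 2 ≤ α / 2 := by
    obtain ⟨K, hK⟩ := exists_pow_lt_of_lt_one (show 0 < α / 4 by positivity)
      (show (1 / 2 : ℝ) < 1 by norm_num)
    refine ⟨K, ?_⟩
    have h1 : τ K < α / 4 := hK
    nlinarith [hτpos K, hτle K]
  obtain ⟨K, hK, hKmin⟩ : ∃ K, 2 * τ K ^ 2 ≤ α / 2 ∧ ∀ k < K, α / 2 < 2 * τ k ^ 2 :=
    ⟨Nat.find hex, Nat.find_spec hex, fun k hk => not_le.mp (Nat.find_min hex hk)⟩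
  have hnet : ∀ k, ∃ (N : Finset (Fin d → Bool)) (p : (Fin d → Bool) → Fin d → Bool), k ≤ K →
      (∀ s, p s ∈ N) ∧ (∀ s, ∑ i, (f s i - f (p s) i) ^ 2 ≤ (2 * τ k ^ 2) ^ 2 * d) ∧
      Real.log N.card ≤ 180 * V / τ k ^ 2 ∧ (k = 0 → ∃ s₀, ∀ s, p s = s₀) := by
    intro k
    rcases k with _ | k
    · refine ⟨{fun _ => true}, fun _ _ => true, fun _ => ⟨fun s => by simp, fun s => ?_, ?_,
        fun _ => ⟨_, fun _ => rfl⟩⟩⟩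
      · calc ∑ i, (f s i - f (fun _ => true) i) ^ 2 ≤ ∑ i : Fin d, (4 : ℝ) := by
              apply Finset.sum_le_sum
              intro i _
              have h1 := abs_le.mp (hf s i)
              have h2 := abs_le.mp (hf (fun _ => true) i)
              nlinarith
          _ = (2 * τ 0 ^ 2) ^ 2 * d := by simp [hτ]; ring
      · simp only [Finset.card_singleton, Nat.cast_one, Real.log_one]
        have := hτpos 0
        positivity
    · have hpos := hτpos (k + 1)
      obtain ⟨N, p, h1, h2, h3⟩ := exists_separated_net f ((2 * τ (k + 1) ^ 2) ^ 2 * d)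
        (by positivity)
      refine ⟨N, p, fun hk => ⟨h1, h2, ?_, fun h => by simp at h⟩⟩
      have hscale : α / 320 ≤ 2 * τ (k + 1) ^ 2 / 40 := by
        have := hKmin k (by omega)
        rw [hτsucc k] at this
        nlinarith
      have h := log_card_le_of_separated hd f hf (2 * τ (k + 1) ^ 2) (by positivity)
        (by nlinarith [hτle (k + 1)]) N h3
        (fun q x r hq => hV q x r (hq.mono subset_rfl hscale))
      refine h.trans (le_of_eq ?_)
      field_simp
      ring
  choose N p hNp using hnet
  set κ : ℝ := α / 272 with hκ
  have hκpos : 0 < κ := by positivity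
  have hincr : ∀ k ∈ Finset.range K,
      ∑ b : Fin d → Bool, ∑ i, bval (b i) * (f (p (k + 1) b) i - f (p k b) i) ≤
        2 ^ d * ((225 * V / κ + 68 * κ * d) * τ (k + 1)) := by
    intro k hk
    rw [Finset.mem_range] at hk
    obtain ⟨hm, hdist, hlog, -⟩ := hNp k hk.le
    obtain ⟨hm', hdist', hlog', -⟩ := hNp (k + 1) hk
    have ht := hτpos (k + 1)
    set P := (Finset.univ : Finset (Fin d → Bool)).image fun b => (p (k + 1) b, p k b) with hP
    have hPsub : P ⊆ N (k + 1) ×ˢ N k := by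
      intro x hx
      obtain ⟨b, -, rfl⟩ := Finset.mem_image.mp hx
      exact Finset.mem_product.mpr ⟨hm' b, hm b⟩
    have hPlog : Real.log P.card ≤ 225 * V / τ (k + 1) ^ 2 := by
      have hPpos : (0 : ℝ) < P.card := by
        have : P.Nonempty := Finset.univ_nonempty.image _
        exact_mod_cast this.card_pos
      have h1 : (P.card : ℝ) ≤ (N (k + 1)).card * (N k).card := by
        have := Finset.card_le_card hPsub
        rw [Finset.card_product] at this
        exact_mod_cast this
      have hn1 : ((N (k + 1)).card : ℝ) ≠ 0 := by
        exact_mod_cast (Finset.card_pos.mpr ⟨_, hm' fun _ => true⟩).ne'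
      have hn2 : ((N k).card : ℝ) ≠ 0 := by
        exact_mod_cast (Finset.card_pos.mpr ⟨_, hm fun _ => true⟩).ne'
      have h2 := Real.log_le_log hPpos h1
      rw [Real.log_mul hn1 hn2] at h2
      have e : 180 * V / τ k ^ 2 = 45 * V / τ (k + 1) ^ 2 := by
        rw [hτsucc k]; field_simp; ring
      have e' : 225 * V / τ (k + 1) ^ 2 =
          180 * V / τ (k + 1) ^ 2 + 45 * V / τ (k + 1) ^ 2 := by ring
      linarith
    have h := sum_bval_selection_le P (fun x i => f x.1 i - f x.2 i)
      (fun b => (p (k + 1) b, p k b)) (fun b => Finset.mem_image_of_mem _ (Finset.mem_univ b))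
      (225 * V / τ (k + 1) ^ 2) (136 * τ (k + 1) ^ 4 * d) (κ / τ (k + 1) ^ 3) (by positivity)
      hPlog (by
        intro x hx
        obtain ⟨b, -, rfl⟩ := Finset.mem_image.mp hx
        calc ∑ i, (f (p (k + 1) b) i - f (p k b) i) ^ 2
            ≤ ∑ i, (2 * (f b i - f (p (k + 1) b) i) ^ 2 + 2 * (f b i - f (p k b) i) ^ 2) := by
              apply Finset.sum_le_sum
              intro i _
              nlinarith [sq_nonneg ((f b i - f (p (k + 1) b) i) + (f b i - f (p k b) i))]
          _ ≤ 2 * ((2 * τ (k + 1) ^ 2) ^ 2 * d) + 2 * ((2 * τ k ^ 2) ^ 2 * d) := by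
              rw [Finset.sum_add_distrib, ← Finset.mul_sum, ← Finset.mul_sum]
              linarith [hdist b, hdist' b]
          _ = _ := by rw [hτsucc k]; ring)
    refine h.trans (le_of_eq ?_)
    field_simp
    ring
  have hgeom : ∑ k ∈ Finset.range K, τ (k + 1) ≤ 1 := by
    have h : ∀ n, ∑ k ∈ Finset.range n, τ (k + 1) = 1 - τ n := by
      intro n
      induction n with
      | zero => simp [hτ]
      | succ n ih => rw [Finset.sum_range_succ, ih, hτsucc n]; ring
    rw [h]
    linarith [hτpos K]
  obtain ⟨-, hdistK, -, -⟩ := hNp K le_rfl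
  have hlast : ∀ b : Fin d → Bool, ∑ i, bval (b i) * (f b i - f (p K b) i) ≤ α / 2 * d := by
    intro b
    have hεpos : 0 < 2 * τ K ^ 2 := by have := hτpos K; positivity
    generalize 2 * τ K ^ 2 = ε at hK hdistK hεpos
    calc ∑ i, bval (b i) * (f b i - f (p K b) i)
        ≤ ∑ i, ((f b i - f (p K b) i) ^ 2 / (2 * ε) + ε / 2) := by
          apply Finset.sum_le_sum
          intro i _
          rw [← sub_nonneg]
          have hb2 : bval (b i) ^ 2 = 1 := by cases b i <;> simp [bval]
          have : (f b i - f (p K b) i) ^ 2 / (2 * ε) + ε / 2 - bval (b i) * (f b i - f (p K b) i)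
              = ((f b i - f (p K b) i) - bval (b i) * ε) ^ 2 / (2 * ε) := by
            field_simp
            linear_combination (-ε ^ 2) * hb2
          rw [this]
          positivity
      _ = (∑ i, (f b i - f (p K b) i) ^ 2) / (2 * ε) + d * (ε / 2) := by
          rw [Finset.sum_add_distrib, Finset.sum_div]; simp
      _ ≤ (ε ^ 2 * d) / (2 * ε) + d * (ε / 2) := by
          gcongr
          exact hdistK b
      _ = ε * d := by field_simp; ring
      _ ≤ _ := by gcongr
  have hfirst : ∑ b : Fin d → Bool, ∑ i, bval (b i) * f (p 0 b) i = 0 := by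
    obtain ⟨s₀, hs₀⟩ := (hNp 0 (Nat.zero_le _)).2.2.2 rfl
    simp only [hs₀]
    exact sum_sum_bval_mul _
  have htel : ∑ b : Fin d → Bool, ∑ i, bval (b i) * f b i =
      ∑ b : Fin d → Bool, ∑ i, bval (b i) * f (p 0 b) i +
      ∑ k ∈ Finset.range K,
        ∑ b : Fin d → Bool, ∑ i, bval (b i) * (f (p (k + 1) b) i - f (p k b) i) +
      ∑ b : Fin d → Bool, ∑ i, bval (b i) * (f b i - f (p K b) i) := by
    rw [Finset.sum_comm (s := Finset.range K), ← Finset.sum_add_distrib,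
      ← Finset.sum_add_distrib]
    apply Finset.sum_congr rfl
    intro b _
    rw [Finset.sum_comm (s := Finset.range K), ← Finset.sum_add_distrib,
      ← Finset.sum_add_distrib]
    apply Finset.sum_congr rfl
    intro i _
    rw [← Finset.mul_sum, Finset.sum_range_sub (fun k => f (p k b) i)]
    ring
  have hlastsum : ∑ b : Fin d → Bool, ∑ i, bval (b i) * (f b i - f (p K b) i) ≤
      2 ^ d * (α / 2 * d) := by
    refine (Finset.sum_le_sum fun b _ => hlast b).trans (le_of_eq ?_)
    simp
  have hmid : ∑ k ∈ Finset.range K,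
        ∑ b : Fin d → Bool, ∑ i, bval (b i) * (f (p (k + 1) b) i - f (p k b) i) ≤
      2 ^ d * (225 * V / κ + 68 * κ * d) := by
    refine (Finset.sum_le_sum hincr).trans ?_
    rw [← Finset.mul_sum, ← Finset.mul_sum]
    gcongr
    exact mul_le_of_le_one_right (by positivity) hgeom
  have htotal : 2 ^ d * (α * d) ≤ 2 ^ d * (225 * V / κ + 68 * κ * d + α / 2 * d) := by
    rw [htel, hfirst] at hcorr
    linarith
  have hred := le_of_mul_le_mul_left htotal (by positivity)
  have e1 : 225 * (V : ℝ) / κ = 61200 * V / α := by rw [hκ]; field_simp; ring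
  have e2 : 68 * κ = α / 4 := by rw [hκ]; ring
  rw [e1, e2] at hred
  rw [le_div_iff₀ (by positivity)]
  have h4 : α * d / 4 ≤ 61200 * V / α := by linarith
  rw [le_div_iff₀ hα] at h4
  nlinarith

/-- A fat-shattered set of a truncated class is fat-shattered by the class itself. -/
lemma Agb.FatShatters.of_truncAt {Z : Type*} {G : Set (Z → ℝ)} {γ α : ℝ} (hγ : 0 < γ) (hα : 0 < α)
    {q : ℕ} {x : Fin q → Z} {r : Fin q → ℝ} (h : FatShatters (truncAt γ '' G) α x r) :
    FatShatters G α x r := by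
  have hup : ∀ i, r i + α ≤ γ := by
    intro i
    obtain ⟨-, ⟨v, -, rfl⟩, hv⟩ := h fun _ => true
    exact ((hv i).1 rfl).trans (max_le (by linarith) (min_le_left _ _))
  have hlow : ∀ i, -γ ≤ r i - α := by
    intro i
    obtain ⟨-, ⟨v, -, rfl⟩, hv⟩ := h fun _ => false
    exact (le_max_left _ _).trans ((hv i).2 rfl)
  intro b
  obtain ⟨-, ⟨v, hvG, rfl⟩, hv⟩ := h b
  refine ⟨v, hvG, fun i => ⟨fun hi => ?_, fun hi => ?_⟩⟩
  · have h1 := (hv i).1 hi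
    rcases le_max_iff.mp h1 with h2 | h2
    · linarith [hlow i]
    · exact h2.trans (min_le_right _ _)
  · have h1 := (max_le_iff.mp ((hv i).2 hi)).2
    rcases min_le_iff.mp h1 with h2 | h2
    · linarith [hup i]
    · exact h2

/-- A point of a convex hull is dominated, along a signed sum of evaluations, by a generator. -/
lemma exists_mem_le_of_mem_convexHull {Z : Type*} {H : Set (Z → ℝ)} {v : Z → ℝ}
    (hv : v ∈ convexHull ℝ H) {q : ℕ} (x : Fin q → Z) (c : Fin q → ℝ) :
    ∃ h ∈ H, ∑ i, c i * v (x i) ≤ ∑ i, c i * h (x i) := by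
  by_contra! hcon
  have hlin : IsLinearMap ℝ fun w : Z → ℝ => ∑ i, c i * w (x i) := by
    constructor
    · intro w w'
      simp [mul_add, Finset.sum_add_distrib]
    · intro a w
      simp only [Pi.smul_apply, smul_eq_mul, Finset.mul_sum]
      exact Finset.sum_congr rfl fun i _ => by ring
  have hlt : v ∈ {w : Z → ℝ | ∑ i, c i * w (x i) < ∑ i, c i * v (x i)} :=
    convexHull_min hcon (convex_halfSpace_lt hlin _) hv
  exact absurd hlt (by simp)

/-- fat-shattering dimension of the truncated convex hull.
There are universal constants `C' ≥ 1` and `0 < c' ≤ 1` such that for every class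
`H ⊆ [−1,1]^X` and every `γ, α > 0`, `fat_α(Conv(H)_{⌈γ⌉}) ≤ C'·fat_{c'α}(H)/α²`:
every point set `α`-fat-shattered by the truncated convex hull has size at most
`C'·fat_{c'α}(H)/α²`. -/
theorem statement7 :
    ∃ C' c' : ℝ, 1 ≤ C' ∧ 0 < c' ∧ c' ≤ 1 ∧
    ∀ (X : Type) (H : Set (X → ℝ)) (γ α : ℝ),
      (∀ h ∈ H, ∀ x, |h x| ≤ 1) → 0 < γ → 0 < α →
      ∀ dH : ℕ, IsFatDim H (c' * α) dH →
      ∀ (k : ℕ) (x : Fin k → X) (r : Fin k → ℝ),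
        FatShatters (truncAt γ '' (convexHull ℝ H)) α x r →
        (k : ℝ) ≤ C' * dH / α ^ 2 := by
  refine ⟨244800, 1 / 320, by norm_num, by norm_num, by norm_num, ?_⟩
  intro X H γ α hH hγ hα dH hdH k x r hsh
  have hconv := hsh.of_truncAt hγ hα
  have hsel : ∀ b : Fin k → Bool, ∃ h ∈ H,
      ∑ i, (bval (b i) * r i + α) ≤ ∑ i, bval (b i) * h (x i) := by
    intro b
    obtain ⟨v, hv, hb⟩ := hconv b
    obtain ⟨h, hh, hle⟩ := exists_mem_le_of_mem_convexHull hv x fun i => bval (b i)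
    refine ⟨h, hh, le_trans (Finset.sum_le_sum fun i _ => ?_) hle⟩
    have h1 := hb i
    cases hbi : b i with
    | true => simp only [bval, if_true]; linarith [h1.1 hbi]
    | false => simp only [bval, Bool.false_eq_true, if_false]; linarith [h1.2 hbi]
  choose g hg hcorr using hsel
  refine card_le_of_rademacher_average (fun b i => g b (x i)) (fun b i => hH _ (hg b) _) α hα ?_ ?_
  · intro q y s hq
    refine hdH.2 ⟨fun j => x (y j), s, fun b => ?_⟩
    obtain ⟨-, ⟨c, rfl⟩, hc⟩ := hq b
    refine ⟨g c, hg c, ?_⟩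
    rw [one_div_mul_eq_div]
    exact hc
  · refine le_trans (le_of_eq ?_) (Finset.sum_le_sum fun b _ => hcorr b)
    simp only [Finset.sum_add_distrib, sum_sum_bval_mul]
    simp
    ring
end
end
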